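/- arXiv:1703.04557 — 8 statements merged into one kernel-verified Lean document; each statement's English description precedes it below -/
import Mathlib

section
/- Under the abstract setting, let s ≥ 1, v_* > 0, V : E → [v_*,∞) Borel, ψ : [v_*,∞) → (0,∞) Borel and locally bounded, α > 0, β ∈ ℝ, and let φ : [v_*,∞) → (0,∞) be continuous with C_φ := sup_{y≥v_*} φ(y)/y < ∞. Assume: (a) ℙ-almost surely sup_{n≥1} ( −(1/H_n) Σ_{k=1}^n η_k Ã_{γ_k}((ψ∘V)^{1/s})(X_{k−1}) ) < +∞; (b) the recursive control RC(ψ,φ,α,β) holds: there is n₀ such that for every n ≥ n₀ and every x ∈ E, Ã_{γ_n}(ψ∘V)(x) ≤ (ψ(V(x))/V(x))(β − α φ(V(x))), and liminf_{y→∞} φ(y) > β/α; (c) V tends to +∞ at infinity, i.e. for every M there is a compact K ⊆ E with V ≥ M on E∖K; (d) lim_{y→∞} φ(y) ψ(y)^{1/s} / y = +∞. Then ℙ-almost surely sup_{n≥1} ν_n(Ṽ_{ψ,φ,s}) < +∞, where Ṽ_{ψ,φ,s}(x) := φ(V(x)) ψ(V(x))^{1/s} / V(x); consequently, for ℙ-almost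 every ω the family of probability measures (ν_n(ω))_{n≥1} is tight (for every ε > 0 there is a compact K ⊆ E with sup_n ν_n(ω)(E∖K) ≤ ε). -/
open MeasureTheory ProbabilityTheory Filter Set

lemma tangent_aux (p a b : ℝ) (hp0 : 0 ≤ p) (hp1 : p ≤ 1) (ha : 0 < a) (hb : 0 ≤ b) :
    b ^ p ≤ a ^ p + p * (a ^ p / a) * (b - a) := by
  have h := rpow_one_add_le_one_add_mul_self (s := b / a - 1) (p := p)
    (by have : 0 ≤ b / a := by positivity
        linarith) hp0 hp1
  have e : 1 + (b / a - 1) = b / a := by ring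
  rw [e, Real.div_rpow hb ha.le] at h
  have hap : 0 < a ^ p := Real.rpow_pos_of_pos ha p
  rw [div_le_iff₀ hap] at h
  have : (1 + p * (b / a - 1)) * a ^ p = a ^ p + p * (a ^ p / a) * (b - a) := by
    field_simp
  linarith

lemma avg_le_aux (η : ℕ → ℝ) (hη : ∀ n, 1 ≤ n → 0 ≤ η n) (n : ℕ) (h : ℝ)
    (hh : h = ∑ k ∈ Finset.Icc 1 n, η k) (f g : ℕ → ℝ) (hfg : ∀ k, 1 ≤ k → f k ≤ g k) :
    h⁻¹ * ∑ k ∈ Finset.Icc 1 n, η k * f k ≤ h⁻¹ * ∑ k ∈ Finset.Icc 1 n, η k * g k := by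
  have h0 : 0 ≤ h := by
    rw [hh]
    exact Finset.sum_nonneg fun k hk => hη k (Finset.mem_Icc.1 hk).1
  refine mul_le_mul_of_nonneg_left (Finset.sum_le_sum fun k hk => ?_) (inv_nonneg.2 h0)
  exact mul_le_mul_of_nonneg_left (hfg k (Finset.mem_Icc.1 hk).1) (hη k (Finset.mem_Icc.1 hk).1)

/-- almost sure tightness of the weighted empirical measures
`ν_n = (1/H_n) Σ_{k=1}^n η_k δ_{X_{k−1}}`.  Under (a) the a.s. boundedness of
`sup_n (−(1/H_n) Σ η_k Ã_{γ_k}((ψ∘V)^{1/s})(X_{k−1}))`, (b) the recursive control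
`RC(ψ,φ,α,β)` with `liminf_{y→∞} φ(y) > β/α`, (c) `V → ∞` at infinity, and
(d) `φ(y)ψ(y)^{1/s}/y → ∞`, we get a.s. `sup_n ν_n(Ṽ_{ψ,φ,s}) < ∞`, and hence a.s.
tightness of `(ν_n)`: for every `ε > 0` there is a compact `K` with
`ν_n(E∖K) ≤ ε` for all `n ≥ 1`. -/
theorem stmt_1
    {E : Type*} [MeasurableSpace E] [MetricSpace E] [TopologicalSpace.SeparableSpace E]
    [LocallyCompactSpace E] [BorelSpace E]
    {Ω : Type*} {m0 : MeasurableSpace Ω} {P : Measure Ω} [IsProbabilityMeasure P]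
    (ℱ : Filtration ℕ m0)
    (γbar : ℝ) (hγbar : 0 < γbar) (γ η H : ℕ → ℝ)
    (hγ : ∀ n, 1 ≤ n → γ n ∈ Set.Ioc (0 : ℝ) γbar)
    (hγlim : Tendsto γ atTop (nhds 0))
    (hΓlim : Tendsto (fun n => ∑ k ∈ Finset.Icc 1 n, γ k) atTop atTop)
    (hη : ∀ n, 1 ≤ n → 0 ≤ η n)
    (hH : ∀ n, H n = ∑ k ∈ Finset.Icc 1 n, η k)
    (hHlim : Tendsto H atTop atTop)
    (Q : ℝ → Kernel E E) [∀ c, IsMarkovKernel (Q c)]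
    (X : ℕ → Ω → E)
    (hXad : ∀ n, Measurable[ℱ n] (X n))
    (hMarkov : ∀ (n : ℕ) (f : E → ℝ), Measurable f →
      Integrable (fun ω => f (X (n + 1) ω)) P →
      P[(fun ω => f (X (n + 1) ω)) | ℱ n]
        =ᵐ[P] fun ω => ∫ y, f y ∂(Q (γ (n + 1)) (X n ω)))
    -- data of the statement
    (s vstar α β : ℝ) (hs : 1 ≤ s) (hv : 0 < vstar) (hα : 0 < α)
    (V : E → ℝ) (hVmeas : Measurable V) (hVlb : ∀ x, vstar ≤ V x)
    (ψ : ℝ → ℝ) (hψmeas : Measurable ψ) (hψpos : ∀ y, vstar ≤ y → 0 < ψ y)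
    (hψloc : ∀ M, ∃ Cloc, ∀ y ∈ Set.Icc vstar M, ψ y ≤ Cloc)
    (φ : ℝ → ℝ) (hφcont : ContinuousOn φ (Set.Ici vstar))
    (hφpos : ∀ y, vstar ≤ y → 0 < φ y)
    (Cφ : ℝ) (hCφ : ∀ y, vstar ≤ y → φ y / y ≤ Cφ)
    (hQint : ∀ c ∈ Set.Ioc (0 : ℝ) γbar, ∀ x : E,
      Integrable (fun y => (ψ (V y)) ^ (1 / s)) (Q c x))
    -- (a) a.s. boundedness of the sup of the weighted sums of the pseudo-generator
    (ha : ∀ᵐ ω ∂P, ∃ M : ℝ, ∀ n, 1 ≤ n →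
      -((H n)⁻¹ * ∑ k ∈ Finset.Icc 1 n, η k *
          (((∫ y, (ψ (V y)) ^ (1 / s) ∂(Q (γ k) (X (k - 1) ω)))
              - (ψ (V (X (k - 1) ω))) ^ (1 / s)) / γ k)) ≤ M)
    -- (b) recursive control RC(ψ,φ,α,β)
    (hQintψ : ∀ c ∈ Set.Ioc (0 : ℝ) γbar, ∀ x : E,
      Integrable (fun y => ψ (V y)) (Q c x))
    (n₀ : ℕ) (hRC : ∀ n, n₀ ≤ n → 1 ≤ n → ∀ x : E,
      ((∫ y, ψ (V y) ∂(Q (γ n) x)) - ψ (V x)) / γ n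
        ≤ (ψ (V x) / V x) * (β - α * φ (V x)))
    (hliminf : ∃ c : ℝ, β / α < c ∧ ∀ᶠ y in atTop, c ≤ φ y)
    -- (c) V tends to infinity at infinity
    (hVinf : ∀ M : ℝ, ∃ K : Set E, IsCompact K ∧ ∀ x ∉ K, M ≤ V x)
    -- (d)
    (hd : Tendsto (fun y => φ y * (ψ y) ^ (1 / s) / y) atTop atTop) :
    ∀ᵐ ω ∂P,
      (∃ M : ℝ, ∀ n, 1 ≤ n →
        (H n)⁻¹ * ∑ k ∈ Finset.Icc 1 n, η k *
          (φ (V (X (k - 1) ω)) * (ψ (V (X (k - 1) ω))) ^ (1 / s) / V (X (k - 1) ω)) ≤ M)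
      ∧ (∀ ε : ℝ, 0 < ε → ∃ K : Set E, IsCompact K ∧ ∀ n, 1 ≤ n →
          (H n)⁻¹ * ∑ k ∈ Finset.Icc 1 n, η k * (Kᶜ.indicator (fun _ => (1 : ℝ)) (X (k - 1) ω))
            ≤ ε) := by
  have hs0 : 0 < s := by linarith
  set p : ℝ := 1 / s with hp
  have hp0 : 0 < p := by positivity
  have hp1 : p ≤ 1 := by rw [hp, div_le_one hs0]; exact hs
  have hVt0 : ∀ x : E, 0 ≤ φ (V x) * (ψ (V x)) ^ p / V x := fun x => by
    have h1 := hφpos _ (hVlb x)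
    have h2 := hψpos _ (hVlb x)
    have h3 : 0 < V x := lt_of_lt_of_le hv (hVlb x)
    positivity
  -- pointwise drift
  have hdrift : ∀ k, n₀ ≤ k → 1 ≤ k → ∀ x : E,
      ((∫ y, (ψ (V y)) ^ p ∂(Q (γ k) x)) - (ψ (V x)) ^ p) / γ k
        ≤ p * ((ψ (V x)) ^ p / V x) * (β - α * φ (V x)) := by
    intro k hk hk1 x
    have hg := hγ k hk1
    have ha0 : 0 < ψ (V x) := hψpos _ (hVlb x)
    have hV0 : 0 < V x := lt_of_lt_of_le hv (hVlb x)
    set a := ψ (V x) with ha_def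
    have hint : Integrable (fun y => a ^ p + p * (a ^ p / a) * (ψ (V y) - a)) (Q (γ k) x) :=
      (integrable_const _).add (((hQintψ _ hg x).sub (integrable_const _)).const_mul _)
    have h1 : (∫ y, (ψ (V y)) ^ p ∂(Q (γ k) x))
        ≤ ∫ y, (a ^ p + p * (a ^ p / a) * (ψ (V y) - a)) ∂(Q (γ k) x) :=
      integral_mono (hQint _ hg x) hint fun y =>
        tangent_aux p a _ hp0.le hp1 ha0 (hψpos _ (hVlb y)).le
    have h2 : ∫ y, (a ^ p + p * (a ^ p / a) * (ψ (V y) - a)) ∂(Q (γ k) x)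
        = a ^ p + p * (a ^ p / a) * ((∫ y, ψ (V y) ∂(Q (γ k) x)) - a) := by
      have hi : Integrable (fun y => p * (a ^ p / a) * (ψ (V y) - a)) (Q (γ k) x) :=
        ((hQintψ _ hg x).sub (integrable_const _)).const_mul _
      rw [integral_add (integrable_const _) hi, integral_const_mul,
        integral_sub (hQintψ _ hg x) (integrable_const _)]
      simp
    have hap : 0 < a ^ p := Real.rpow_pos_of_pos ha0 p
    have h3 := mul_le_mul_of_nonneg_left (hRC k hk hk1 x)
      (show 0 ≤ p * (a ^ p / a) by positivity)
    calc ((∫ y, (ψ (V y)) ^ p ∂(Q (γ k) x)) - a ^ p) / γ k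
        ≤ (p * (a ^ p / a) * ((∫ y, ψ (V y) ∂(Q (γ k) x)) - a)) / γ k := by
          apply div_le_div_of_nonneg_right _ hg.1.le
          linarith
      _ = p * (a ^ p / a) * (((∫ y, ψ (V y) ∂(Q (γ k) x)) - a) / γ k) := by ring
      _ ≤ _ := h3
      _ = p * (a ^ p / V x) * (β - α * φ (V x)) := by rw [← ha_def]; field_simp
  -- uniform drift
  obtain ⟨δ, hδ, Y, hY⟩ : ∃ δ : ℝ, 0 < δ ∧ ∃ Y : ℝ, ∀ y, Y ≤ y → vstar ≤ y →
      β - α * φ y ≤ -(δ * φ y) := by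
    obtain ⟨c, hc, hev⟩ := hliminf
    obtain ⟨Y, hY⟩ := eventually_atTop.1 hev
    rcases le_or_gt β 0 with hβ | hβ
    · exact ⟨α, hα, Y, fun y _ _ => by linarith⟩
    · have hc0 : 0 < c := lt_trans (by positivity) hc
      refine ⟨α - β / c, ?_, Y, fun y hy _ => ?_⟩
      · rw [div_lt_iff₀ hα] at hc
        rw [sub_pos, div_lt_iff₀ hc0]
        linarith
      · have h1 : β / c * c ≤ β / c * φ y :=
          mul_le_mul_of_nonneg_left (hY y hy) (by positivity)
        rw [div_mul_cancel₀ _ hc0.ne'] at h1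
        linarith
  obtain ⟨C, hC0, hC⟩ : ∃ C : ℝ, 0 ≤ C ∧ ∀ x : E,
      p * ((ψ (V x)) ^ p / V x) * (β - α * φ (V x))
        ≤ C - p * δ * (φ (V x) * (ψ (V x)) ^ p / V x) := by
    obtain ⟨B, hB⟩ := hψloc Y
    set B' := max B 0
    have hB'0 : 0 ≤ B' := le_max_right _ _
    have hBp : 0 ≤ B' ^ p := Real.rpow_nonneg hB'0 p
    have hCφ0 : 0 ≤ Cφ := le_trans (div_nonneg (hφpos _ le_rfl).le hv.le) (hCφ _ le_rfl)
    refine ⟨p * (B' ^ p / vstar) * |β| + p * δ * (Cφ * B' ^ p), by positivity, fun x => ?_⟩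
    have hV := hVlb x
    have hV0 : 0 < V x := lt_of_lt_of_le hv hV
    have hψ0 := hψpos _ hV
    have hφ0 := hφpos _ hV
    have hψp : 0 < ψ (V x) ^ p := Real.rpow_pos_of_pos hψ0 p
    rcases le_or_gt Y (V x) with hy | hy
    · have h1 := mul_le_mul_of_nonneg_left (hY _ hy hV)
        (show 0 ≤ p * ((ψ (V x)) ^ p / V x) by positivity)
      have h2 : p * ((ψ (V x)) ^ p / V x) * -(δ * φ (V x))
        = - (p * δ * (φ (V x) * (ψ (V x)) ^ p / V x)) := by ring
      have h3 : 0 ≤ p * (B' ^ p / vstar) * |β| + p * δ * (Cφ * B' ^ p) := by positivity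
      linarith
    · have hle : ψ (V x) ^ p ≤ B' ^ p :=
        Real.rpow_le_rpow hψ0.le ((hB _ ⟨hV, hy.le⟩).trans (le_max_left _ _)) hp0.le
      have h1 : p * ((ψ (V x)) ^ p / V x) * (β - α * φ (V x))
          ≤ p * (B' ^ p / vstar) * |β| := by
        calc p * ((ψ (V x)) ^ p / V x) * (β - α * φ (V x))
            ≤ p * ((ψ (V x)) ^ p / V x) * |β| := by
              apply mul_le_mul_of_nonneg_left _ (by positivity)
              have := le_abs_self β
              have : 0 ≤ α * φ (V x) := by positivity
              linarith
          _ ≤ _ := by gcongr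
      have h2 : φ (V x) * (ψ (V x)) ^ p / V x ≤ Cφ * B' ^ p := by
        calc φ (V x) * (ψ (V x)) ^ p / V x = φ (V x) / V x * (ψ (V x)) ^ p := by ring
          _ ≤ _ := mul_le_mul (hCφ _ hV) hle hψp.le hCφ0
      have h3 := mul_le_mul_of_nonneg_left h2 (show 0 ≤ p * δ by positivity)
      linarith
  have hH0 : ∀ n, 0 ≤ H n := fun n => by
    rw [hH]
    exact Finset.sum_nonneg fun k hk => hη k (Finset.mem_Icc.1 hk).1
  filter_upwards [ha] with ω hω
  obtain ⟨M, hM⟩ := hω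
  set A : ℕ → ℝ := fun k => ((∫ y, (ψ (V y)) ^ p ∂(Q (γ k) (X (k - 1) ω)))
              - (ψ (V (X (k - 1) ω))) ^ p) / γ k with hA
  set W : ℕ → ℝ := fun k =>
    φ (V (X (k - 1) ω)) * (ψ (V (X (k - 1) ω))) ^ p / V (X (k - 1) ω) with hW
  have hpδ : 0 < p * δ := by positivity
  obtain ⟨D, hD0, hD⟩ : ∃ D : ℝ, 0 ≤ D ∧ ∀ k, 1 ≤ k → W k ≤ (D - A k) / (p * δ) := by
    refine ⟨C + ∑ k ∈ Finset.range n₀, |p * δ * W k + A k|, by positivity, fun k hk => ?_⟩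
    rw [le_div_iff₀ hpδ]
    rcases le_or_gt n₀ k with hk0 | hk0
    · have h1 : A k ≤ C - p * δ * W k := (hdrift k hk0 hk (X (k - 1) ω)).trans (hC _)
      have h2 : 0 ≤ ∑ k ∈ Finset.range n₀, |p * δ * W k + A k| := by positivity
      linarith
    · have h1 : |p * δ * W k + A k| ≤ ∑ k ∈ Finset.range n₀, |p * δ * W k + A k| :=
        Finset.single_le_sum (f := fun k => |p * δ * W k + A k|) (fun i _ => abs_nonneg _)
          (Finset.mem_range.2 hk0)
      have h2 := le_abs_self (p * δ * W k + A k)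
      linarith
  have hbound : ∀ n, 1 ≤ n → (H n)⁻¹ * ∑ k ∈ Finset.Icc 1 n, η k * W k ≤ (D + M) / (p * δ) := by
    intro n hn
    refine (avg_le_aux η hη n (H n) (hH n) W _ hD).trans ?_
    have e : (H n)⁻¹ * ∑ k ∈ Finset.Icc 1 n, η k * ((D - A k) / (p * δ))
        = ((H n)⁻¹ * H n * D + -((H n)⁻¹ * ∑ k ∈ Finset.Icc 1 n, η k * A k)) / (p * δ) := by
      have : ∑ k ∈ Finset.Icc 1 n, η k * ((D - A k) / (p * δ))
          = (H n * D - ∑ k ∈ Finset.Icc 1 n, η k * A k) / (p * δ) := by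
        rw [hH n, Finset.sum_mul, ← Finset.sum_sub_distrib, Finset.sum_div]
        exact Finset.sum_congr rfl fun k _ => by ring
      rw [this]; ring
    rw [e]
    apply div_le_div_of_nonneg_right _ hpδ.le
    have h1 : (H n)⁻¹ * H n * D ≤ 1 * D :=
      mul_le_mul_of_nonneg_right inv_mul_le_one hD0
    have h2 := hM n hn
    linarith
  refine ⟨⟨_, hbound⟩, fun ε hε => ?_⟩
  set L := max ((D + M) / (p * δ)) 0
  have hL0 : 0 ≤ L := le_max_right _ _
  obtain ⟨y0, hy0⟩ := eventually_atTop.1 (hd.eventually_ge_atTop ((L + 1) / ε))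
  obtain ⟨K, hK, hKV⟩ := hVinf y0
  refine ⟨K, hK, fun n hn => ?_⟩
  have hind : ∀ k, 1 ≤ k →
      Kᶜ.indicator (fun _ => (1 : ℝ)) (X (k - 1) ω) ≤ ε / (L + 1) * W k := by
    intro k _
    by_cases hx : X (k - 1) ω ∈ K
    · rw [Set.indicator_of_notMem (by simpa using hx)]
      exact mul_nonneg (by positivity) (hVt0 _)
    · rw [Set.indicator_of_mem (by simpa using hx)]
      have h1 : (L + 1) / ε ≤ W k := hy0 _ (hKV _ hx)
      calc (1 : ℝ) = ε / (L + 1) * ((L + 1) / ε) := by field_simp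
        _ ≤ _ := mul_le_mul_of_nonneg_left h1 (by positivity)
  refine (avg_le_aux η hη n (H n) (hH n) _ _ hind).trans ?_
  have e : (H n)⁻¹ * ∑ k ∈ Finset.Icc 1 n, η k * (ε / (L + 1) * W k)
      = ε / (L + 1) * ((H n)⁻¹ * ∑ k ∈ Finset.Icc 1 n, η k * W k) := by
    have : ∑ k ∈ Finset.Icc 1 n, η k * (ε / (L + 1) * W k)
        = ε / (L + 1) * ∑ k ∈ Finset.Icc 1 n, η k * W k := by
      rw [Finset.mul_sum]
      exact Finset.sum_congr rfl fun k _ => by ring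
    rw [this]; ring
  rw [e]
  have h1 : (H n)⁻¹ * ∑ k ∈ Finset.Icc 1 n, η k * W k ≤ L + 1 :=
    (hbound n hn).trans ((le_max_left _ _).trans (by linarith))
  calc ε / (L + 1) * ((H n)⁻¹ * ∑ k ∈ Finset.Icc 1 n, η k * W k)
      ≤ ε / (L + 1) * (L + 1) := mul_le_mul_of_nonneg_left h1 (by positivity)
    _ = ε := by field_simp
end

section
/- Under the abstract setting, let f : E → ℝ be bounded measurable and let Af : E → ℝ be a measurable function such that |Ã_γ f(x) − Af(x)| ≤ Λ_f(x,γ) for all x ∈ E and γ ∈ (0,γ̄], where Λ_f has the representation Λ_f(x,γ) = Σ_{i=1}^q g_i(x) 𝔼̃[Λ̃_{f,i}(x,γ,·)] with q ∈ ℕ, g = (g_1,…,g_q) : E → [0,∞)^q locally bounded Borel, (Ω̃,𝒢̃,ℙ̃) a probability space and Λ̃_f : E×(0,γ̄]×Ω̃ → [0,∞)^q measurable with max_i 𝔼̃[sup_{x∈E} sup_{γ∈(0,γ̄]} Λ̃_{f,i}(x,γ,·)] < ∞, and where each coordinate i satisfies either condition (I): ℙ̃-a.s., (i) for every compact K ⊆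 E, lim_{γ→0} sup_{x∈K} Λ̃_{f,i}(x,γ,ω̃) = 0, and (ii) there is γ̲(ω̃) ∈ (0,γ̄] such that for every ε > 0 there is a compact K_ε with sup_{x∈E∖K_ε} sup_{γ∈(0,γ̲(ω̃)]} Λ̃_{f,i}(x,γ,ω̃) < ε; or condition (II): ℙ̃-a.s., lim_{γ→0} sup_{x∈E} Λ̃_{f,i}(x,γ,ω̃) g_i(x) = 0. Assume moreover that ℙ-almost surely sup_{n} ν_n(g_i) < ∞ for each i, and that ℙ-almost surely lim_{n→∞} (1/H_n) Σ_{k=1}^n η_k Ã_{γ_k} f(X_{k−1}) = 0. Then ℙ-almost surely, lim_{n→∞} ν_n(Af) = 0. -/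
open MeasureTheory ProbabilityTheory Filter Set

/-- weighted averages of a null sequence, with weights of bounded average, tend to zero. -/
lemma avg_tendsto_zero (w a H : ℕ → ℝ) (M : ℝ) (hw : ∀ k, 1 ≤ k → 0 ≤ w k)
    (hH0 : ∀ n, 0 ≤ H n) (hH : Tendsto H atTop atTop)
    (hM : ∀ n, 1 ≤ n → (H n)⁻¹ * ∑ k ∈ Finset.Icc 1 n, w k ≤ M)
    (ha : Tendsto a atTop (nhds 0)) :
    Tendsto (fun n => (H n)⁻¹ * ∑ k ∈ Finset.Icc 1 n, w k * a k) atTop (nhds 0) := by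
  rw [Metric.tendsto_atTop]
  intro ε hε
  have hD : 0 < 2 * (|M| + 1) := by positivity
  set e := ε / (2 * (|M| + 1)) with he
  have he0 : 0 < e := by positivity
  obtain ⟨N, hN⟩ := Metric.tendsto_atTop.1 ha e he0
  set C := ∑ k ∈ Finset.Icc 1 N, w k * |a k| with hC
  have hlim : Tendsto (fun n => (H n)⁻¹ * C) atTop (nhds 0) := by
    simpa using (tendsto_inv_atTop_zero.comp hH).mul_const C
  obtain ⟨N2, hN2⟩ := Metric.tendsto_atTop.1 hlim (ε / 2) (by positivity)
  refine ⟨max N2 1, fun n hn => ?_⟩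
  have hn1 : 1 ≤ n := le_trans (le_max_right _ _) hn
  have h2 := hN2 n (le_trans (le_max_left _ _) hn)
  rw [Real.dist_eq, sub_zero] at h2 ⊢
  have hinv : 0 ≤ (H n)⁻¹ := inv_nonneg.2 (hH0 n)
  have hsum : |∑ k ∈ Finset.Icc 1 n, w k * a k| ≤ e * ∑ k ∈ Finset.Icc 1 n, w k + C := by
    have h3 : ∀ k ∈ Finset.Icc 1 n,
        |w k * a k| ≤ e * w k + (if k ∈ Finset.Icc 1 N then w k * |a k| else 0) := by
      intro k hk
      have hk1 : 1 ≤ k := (Finset.mem_Icc.1 hk).1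
      have hwk := hw k hk1
      rw [abs_mul, abs_of_nonneg hwk]
      split_ifs with h
      · nlinarith [mul_nonneg he0.le hwk]
      · have hNk : N ≤ k := by
          rw [Finset.mem_Icc] at h
          omega
        have h4 := hN k hNk
        rw [Real.dist_eq, sub_zero] at h4
        nlinarith [mul_le_mul_of_nonneg_left h4.le hwk]
    refine (Finset.abs_sum_le_sum_abs _ _).trans ((Finset.sum_le_sum h3).trans ?_)
    rw [Finset.sum_add_distrib, ← Finset.mul_sum, ← Finset.sum_filter]
    gcongr
    rw [hC]
    refine Finset.sum_le_sum_of_subset_of_nonneg ?_ ?_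
    · intro k hk
      exact (Finset.mem_filter.1 hk).2
    · intro k hk _
      exact mul_nonneg (hw k (Finset.mem_Icc.1 hk).1) (abs_nonneg _)
  rw [abs_mul, abs_of_nonneg hinv]
  have h5 : (H n)⁻¹ * |∑ k ∈ Finset.Icc 1 n, w k * a k|
      ≤ e * ((H n)⁻¹ * ∑ k ∈ Finset.Icc 1 n, w k) + (H n)⁻¹ * C := by
    calc _ ≤ (H n)⁻¹ * (e * ∑ k ∈ Finset.Icc 1 n, w k + C) :=
          mul_le_mul_of_nonneg_left hsum hinv
      _ = _ := by ring
  have h6 : e * ((H n)⁻¹ * ∑ k ∈ Finset.Icc 1 n, w k) ≤ e * (|M| + 1) := by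
    apply mul_le_mul_of_nonneg_left _ he0.le
    linarith [hM n hn1, le_abs_self M]
  have h7 : e * (|M| + 1) = ε / 2 := by
    rw [he]; field_simp
  have h8 := le_abs_self ((H n)⁻¹ * C)
  linarith

/-- identification step.  If `|Ã_γ f(x) − Af(x)| ≤ Λ_f(x,γ)` where
`Λ_f(x,γ) = Σ_i g_i(x) 𝔼̃[Λ̃_{f,i}(x,γ,·)]` with each coordinate satisfying condition (I)
or (II), if a.s. `sup_n ν_n(g_i) < ∞` for each `i`, and if a.s.
`(1/H_n) Σ_{k=1}^n η_k Ã_{γ_k} f(X_{k−1}) → 0`, then a.s. `ν_n(Af) → 0`. -/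
theorem stmt_3
    {E : Type*} [MeasurableSpace E] [MetricSpace E] [TopologicalSpace.SeparableSpace E]
    [LocallyCompactSpace E] [BorelSpace E]
    {Ω : Type*} {m0 : MeasurableSpace Ω} {P : Measure Ω} [IsProbabilityMeasure P]
    (ℱ : Filtration ℕ m0)
    (γbar : ℝ) (hγbar : 0 < γbar) (γ η H : ℕ → ℝ)
    (hγ : ∀ n, 1 ≤ n → γ n ∈ Set.Ioc (0 : ℝ) γbar)
    (hγlim : Tendsto γ atTop (nhds 0))
    (hΓlim : Tendsto (fun n => ∑ k ∈ Finset.Icc 1 n, γ k) atTop atTop)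
    (hη : ∀ n, 1 ≤ n → 0 ≤ η n)
    (hH : ∀ n, H n = ∑ k ∈ Finset.Icc 1 n, η k)
    (hHlim : Tendsto H atTop atTop)
    (Q : ℝ → Kernel E E) [∀ c, IsMarkovKernel (Q c)]
    (X : ℕ → Ω → E)
    (hXad : ∀ n, Measurable[ℱ n] (X n))
    (hMarkov : ∀ (n : ℕ) (f : E → ℝ), Measurable f →
      Integrable (fun ω => f (X (n + 1) ω)) P →
      P[(fun ω => f (X (n + 1) ω)) | ℱ n]
        =ᵐ[P] fun ω => ∫ y, f y ∂(Q (γ (n + 1)) (X n ω)))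
    -- the test function and its generator approximation
    (f : E → ℝ) (hfmeas : Measurable f) (Cb : ℝ) (hfb : ∀ x, |f x| ≤ Cb)
    (Af : E → ℝ) (hAfmeas : Measurable Af)
    (q : ℕ)
    (g : E → Fin q → ℝ) (hgmeas : ∀ i, Measurable (fun x => g x i))
    (hgpos : ∀ x i, 0 ≤ g x i)
    (hgloc : ∀ K : Set E, IsCompact K → ∃ C : ℝ, ∀ x ∈ K, ∀ i, g x i ≤ C)
    {Ωt : Type*} [MeasurableSpace Ωt] (Pt : Measure Ωt) [IsProbabilityMeasure Pt]
    (Λt : E → ℝ → Ωt → Fin q → ℝ)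
    (hΛmeas : ∀ i, Measurable (fun p : E × ℝ × Ωt => Λt p.1 p.2.1 p.2.2 i))
    (hΛpos : ∀ x c ωt i, 0 ≤ Λt x c ωt i)
    (S : Ωt → ℝ) (hSint : Integrable S Pt)
    (hSenv : ∀ᵐ ωt ∂Pt, ∀ (i : Fin q) (x : E), ∀ c ∈ Set.Ioc (0 : ℝ) γbar, Λt x c ωt i ≤ S ωt)
    -- |Ã_γ f − Af| ≤ Λ_f with Λ_f(x,γ) = Σ_i g_i(x) 𝔼̃[Λ̃_{f,i}(x,γ,·)]
    (happrox : ∀ c ∈ Set.Ioc (0 : ℝ) γbar, ∀ x : E,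
      |((∫ y, f y ∂(Q c x)) - f x) / c - Af x|
        ≤ ∑ i, g x i * ∫ ωt, Λt x c ωt i ∂Pt)
    -- each coordinate satisfies condition (I) or condition (II)
    (hIorII : ∀ i : Fin q,
      (∀ᵐ ωt ∂Pt,
        (∀ K : Set E, IsCompact K → ∀ ε : ℝ, 0 < ε → ∃ δ : ℝ, 0 < δ ∧
          ∀ c ∈ Set.Ioc (0 : ℝ) γbar, c < δ → ∀ x ∈ K, Λt x c ωt i ≤ ε)
        ∧ (∃ γlow : ℝ, γlow ∈ Set.Ioc (0 : ℝ) γbar ∧ ∀ ε : ℝ, 0 < ε →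
            ∃ K : Set E, IsCompact K ∧ ∀ x ∉ K,
              ∀ c ∈ Set.Ioc (0 : ℝ) γlow, Λt x c ωt i ≤ ε))
      ∨ (∀ᵐ ωt ∂Pt, ∀ ε : ℝ, 0 < ε → ∃ δ : ℝ, 0 < δ ∧
          ∀ c ∈ Set.Ioc (0 : ℝ) γbar, c < δ → ∀ x : E, Λt x c ωt i * g x i ≤ ε))
    -- a.s. boundedness of ν_n(g_i)
    (hνg : ∀ᵐ ω ∂P, ∀ i : Fin q, ∃ M : ℝ, ∀ n, 1 ≤ n →
      (H n)⁻¹ * ∑ k ∈ Finset.Icc 1 n, η k * g (X (k - 1) ω) i ≤ M)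
    -- a.s. convergence of the weighted pseudo-generator sums to 0
    (hAtil : ∀ᵐ ω ∂P, Tendsto (fun n => (H n)⁻¹ * ∑ k ∈ Finset.Icc 1 n, η k *
        (((∫ y, f y ∂(Q (γ k) (X (k - 1) ω))) - f (X (k - 1) ω)) / γ k))
      atTop (nhds 0)) :
    ∀ᵐ ω ∂P, Tendsto (fun n => (H n)⁻¹ * ∑ k ∈ Finset.Icc 1 n, η k * Af (X (k - 1) ω))
      atTop (nhds 0) := by
  have hH0 : ∀ n, 0 ≤ H n := fun n => by
    rw [hH]
    exact Finset.sum_nonneg fun k hk => hη k (Finset.mem_Icc.1 hk).1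
  have hsmall : ∀ δ : ℝ, 0 < δ → ∀ᶠ k in atTop, γ k ∈ Set.Ioc (0 : ℝ) γbar ∧ γ k < δ := by
    intro δ hδ
    filter_upwards [eventually_ge_atTop 1, hγlim.eventually_lt_const hδ] with k hk1 hk2
    exact ⟨hγ k hk1, hk2⟩
  filter_upwards [hνg, hAtil] with ω hω hA
  -- the error term of each coordinate tends to zero
  have key : ∀ i : Fin q, Tendsto (fun n => (H n)⁻¹ * ∑ k ∈ Finset.Icc 1 n,
      η k * (g (X (k - 1) ω) i * ∫ ωt, Λt (X (k - 1) ω) (γ k) ωt i ∂Pt)) atTop (nhds 0) := by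
    intro i
    obtain ⟨M, hM⟩ := hω i
    have hmeas : ∀ k, Measurable (fun ωt => Λt (X (k - 1) ω) (γ k) ωt i) := fun k =>
      (hΛmeas i).comp (by fun_prop : Measurable fun ωt : Ωt => ((X (k - 1) ω), (γ k), ωt))
    have hΛint : ∀ k, 1 ≤ k → Integrable (fun ωt => Λt (X (k - 1) ω) (γ k) ωt i) Pt := by
      intro k hk
      refine hSint.mono' (hmeas k).aestronglyMeasurable ?_
      filter_upwards [hSenv] with ωt h
      rw [Real.norm_eq_abs, abs_of_nonneg (hΛpos _ _ _ _)]
      exact h i _ _ (hγ k hk)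
    have hw : ∀ k, 1 ≤ k → 0 ≤ η k * g (X (k - 1) ω) i := fun k hk =>
      mul_nonneg (hη k hk) (hgpos _ _)
    set F : ℕ → Ωt → ℝ := fun n ωt => (H n)⁻¹ * ∑ k ∈ Finset.Icc 1 n,
      (η k * g (X (k - 1) ω) i) * Λt (X (k - 1) ω) (γ k) ωt i with hF
    have hFint : ∀ n, ∫ ωt, F n ωt ∂Pt = (H n)⁻¹ * ∑ k ∈ Finset.Icc 1 n,
        η k * (g (X (k - 1) ω) i * ∫ ωt, Λt (X (k - 1) ω) (γ k) ωt i ∂Pt) := by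
      intro n
      simp only [hF]
      rw [integral_const_mul, integral_finsetSum]
      · congr 1
        refine Finset.sum_congr rfl fun k _ => ?_
        rw [integral_const_mul, mul_assoc]
      · intro k hk
        exact (hΛint k (Finset.mem_Icc.1 hk).1).const_mul _
    have hlim : Tendsto (fun n => ∫ ωt, F n ωt ∂Pt) atTop (nhds (∫ _, (0 : ℝ) ∂Pt)) := by
      refine tendsto_integral_filter_of_dominated_convergence (fun ωt => M * S ωt) ?_ ?_
        (hSint.const_mul M) ?_
      · refine Eventually.of_forall fun n => Measurable.aestronglyMeasurable ?_
        simp only [hF]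
        exact (Finset.measurable_fun_sum _ fun k _ => (hmeas k).const_mul _).const_mul _
      · filter_upwards [eventually_ge_atTop 1] with n hn
        filter_upwards [hSenv] with ωt h
        have hinv : 0 ≤ (H n)⁻¹ := inv_nonneg.2 (hH0 n)
        have hS0 : 0 ≤ S ωt := (hΛpos _ _ _ _).trans (h i (X 0 ω) γbar ⟨hγbar, le_rfl⟩)
        have hF0 : 0 ≤ F n ωt := mul_nonneg hinv (Finset.sum_nonneg fun k hk =>
          mul_nonneg (hw k (Finset.mem_Icc.1 hk).1) (hΛpos _ _ _ _))
        rw [Real.norm_eq_abs, abs_of_nonneg hF0]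
        calc F n ωt ≤ (H n)⁻¹ * ∑ k ∈ Finset.Icc 1 n, (η k * g (X (k - 1) ω) i) * S ωt := by
              refine mul_le_mul_of_nonneg_left (Finset.sum_le_sum fun k hk => ?_) hinv
              have hk1 := (Finset.mem_Icc.1 hk).1
              exact mul_le_mul_of_nonneg_left (h i _ _ (hγ k hk1)) (hw k hk1)
          _ = ((H n)⁻¹ * ∑ k ∈ Finset.Icc 1 n, η k * g (X (k - 1) ω) i) * S ωt := by
              rw [← Finset.sum_mul, mul_assoc]
          _ ≤ M * S ωt := mul_le_mul_of_nonneg_right (hM n hn) hS0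
      · rcases hIorII i with hI | hII
        · filter_upwards [hI] with ωt h
          obtain ⟨h1, γlow, hlow, h2⟩ := h
          refine avg_tendsto_zero _ (fun k => Λt (X (k - 1) ω) (γ k) ωt i) H M hw hH0 hHlim hM ?_
          rw [Metric.tendsto_nhds]
          intro ε hε
          obtain ⟨K, hK, hK2⟩ := h2 (ε / 2) (by positivity)
          obtain ⟨δ, hδ, hδ2⟩ := h1 K hK (ε / 2) (by positivity)
          filter_upwards [hsmall (min δ γlow) (lt_min hδ hlow.1)] with k hk
          rw [Real.dist_eq, sub_zero, abs_of_nonneg (hΛpos _ _ _ _)]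
          have : Λt (X (k - 1) ω) (γ k) ωt i ≤ ε / 2 := by
            by_cases hx : X (k - 1) ω ∈ K
            · exact hδ2 _ hk.1 (hk.2.trans_le (min_le_left _ _)) _ hx
            · exact hK2 _ hx _ ⟨hk.1.1, (hk.2.trans_le (min_le_right _ _)).le⟩
          linarith
        · filter_upwards [hII] with ωt h
          have := avg_tendsto_zero η
            (fun k => Λt (X (k - 1) ω) (γ k) ωt i * g (X (k - 1) ω) i) H 1 hη hH0 hHlim
            (fun n _ => by rw [← hH]; exact inv_mul_le_one) ?_
          · refine this.congr fun n => ?_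
            simp only [hF]
            congr 1
            exact Finset.sum_congr rfl fun k _ => by ring
          · rw [Metric.tendsto_nhds]
            intro ε hε
            obtain ⟨δ, hδ, hδ2⟩ := h (ε / 2) (by positivity)
            filter_upwards [hsmall δ hδ] with k hk
            rw [Real.dist_eq, sub_zero, abs_of_nonneg (mul_nonneg (hΛpos _ _ _ _) (hgpos _ _))]
            have := hδ2 _ hk.1 hk.2 (X (k - 1) ω)
            linarith
    rw [integral_zero] at hlim
    exact hlim.congr hFint
  have hsumlim := tendsto_finsetSum Finset.univ fun i _ => key i
  rw [Finset.sum_const_zero] at hsumlim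
  have hdiff : Tendsto (fun n => (H n)⁻¹ * ∑ k ∈ Finset.Icc 1 n, η k *
        (((∫ y, f y ∂(Q (γ k) (X (k - 1) ω))) - f (X (k - 1) ω)) / γ k)
      - (H n)⁻¹ * ∑ k ∈ Finset.Icc 1 n, η k * Af (X (k - 1) ω)) atTop (nhds 0) := by
    refine squeeze_zero_norm (fun n => ?_) hsumlim
    have hinv : 0 ≤ (H n)⁻¹ := inv_nonneg.2 (hH0 n)
    rw [Real.norm_eq_abs, ← mul_sub, ← Finset.sum_sub_distrib, abs_mul, abs_of_nonneg hinv,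
      ← Finset.mul_sum, Finset.sum_comm]
    refine mul_le_mul_of_nonneg_left ?_ hinv
    refine (Finset.abs_sum_le_sum_abs _ _).trans (Finset.sum_le_sum fun k hk => ?_)
    have hk1 := (Finset.mem_Icc.1 hk).1
    rw [← mul_sub, abs_mul, abs_of_nonneg (hη k hk1), ← Finset.mul_sum]
    exact mul_le_mul_of_nonneg_left (happrox _ (hγ k hk1) _) (hη k hk1)
  have := hA.sub hdiff
  simpa using this
end

section
/- Let E be a locally compact separable metric space, q ∈ ℕ, g = (g_1,…,g_q) : E → [0,∞)^q locally bounded Borel, γ̄ > 0, (Ω̃,𝒢̃,ℙ̃) a probability space, and Λ̃ : E×(0,γ̄]×Ω̃ → [0,∞)^q measurable with max_i 𝔼̃[sup_{x∈E} sup_{γ∈(0,γ̄]} Λ̃_i(x,γ,·)] < ∞. Suppose each coordinate i satisfies either condition (I): ℙ̃-a.s., (i) for every compact K ⊆ E, lim_{γ→0} sup_{x∈K} Λ̃_i(x,γ,ω̃) = 0, and (ii) there is γ̲(ω̃) ∈ (0,γ̄] such that for every ε > 0 there is a compact K_ε with sup_{x∈E∖K_ε} sup_{γ∈(0,γ̲(ω̃)]}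 Λ̃_i(x,γ,ω̃) < ε; or condition (II): ℙ̃-a.s., lim_{γ→0} sup_{x∈E} Λ̃_i(x,γ,ω̃) g_i(x) = 0. Define Λ(x,γ) := Σ_{i=1}^q g_i(x) 𝔼̃[Λ̃_i(x,γ,·)]. Let (γ_n)_{n≥1} be a sequence in (0,γ̄] with γ_n → 0, (η_n)_{n≥1} nonnegative with H_n := η_1+⋯+η_n → ∞, and let (x̄_n)_{n≥0} be a sequence in E with max_i sup_{n≥1} (1/H_n) Σ_{k=1}^n η_k g_i(x̄_{k−1}) < ∞. Then lim_{n→∞} (1/H_n) Σ_{k=1}^n η_k Λ(x̄_{k−1},γ_k) = 0. -/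
open MeasureTheory Filter Set

theorem aux_sum_Icc (f : ℕ → ℝ) (n : ℕ) :
    ∑ k ∈ Finset.Icc 1 n, f k = ∑ k ∈ Finset.range n, f (k + 1) := by
  induction n with
  | zero => simp
  | succ n ih => rw [Finset.sum_Icc_succ_top (by omega), Finset.sum_range_succ, ih]

theorem aux_avg (η H v b : ℕ → ℝ)
    (hη : ∀ n, 1 ≤ n → 0 ≤ η n)
    (hH : ∀ n, H n = ∑ k ∈ Finset.Icc 1 n, η k)
    (hHlim : Tendsto H atTop atTop)
    (hv : ∀ n, 0 ≤ v n)
    (hM : ∃ M : ℝ, ∀ n, 1 ≤ n → (H n)⁻¹ * ∑ k ∈ Finset.Icc 1 n, η k * v k ≤ M)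
    (hb : Tendsto b atTop (nhds 0)) :
    Tendsto (fun n => (H n)⁻¹ * ∑ k ∈ Finset.Icc 1 n, η k * ((1 + v k) * b k))
      atTop (nhds 0) := by
  obtain ⟨M, hM⟩ := hM
  have hw : ∀ k, 0 ≤ η (k + 1) * (1 + v (k + 1)) := fun k =>
    mul_nonneg (hη _ (by omega)) (by linarith [hv (k + 1)])
  have hHle : ∀ n, H n ≤ ∑ k ∈ Finset.range n, η (k + 1) * (1 + v (k + 1)) := by
    intro n
    rw [hH, aux_sum_Icc]
    refine Finset.sum_le_sum fun k _ => ?_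
    nlinarith [mul_nonneg (hη (k + 1) (by omega)) (hv (k + 1))]
  have h1 : (fun k => η (k + 1) * (1 + v (k + 1)) * b (k + 1)) =o[atTop]
      (fun k => η (k + 1) * (1 + v (k + 1))) := by
    have hb1 : (fun k => b (k + 1)) =o[atTop] (fun _ => (1 : ℝ)) :=
      (Asymptotics.isLittleO_one_iff ℝ).2 (hb.comp (tendsto_add_atTop_nat 1))
    simpa using (Asymptotics.isBigO_refl (fun k => η (k + 1) * (1 + v (k + 1)))
      atTop).mul_isLittleO hb1
  have h2 := h1.sum_range hw (tendsto_atTop_mono hHle hHlim)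
  have h3 : (fun n => ∑ k ∈ Finset.range n, η (k + 1) * (1 + v (k + 1))) =O[atTop] H := by
    refine Asymptotics.IsBigO.of_bound (1 + M) ?_
    filter_upwards [hHlim.eventually_gt_atTop 0, eventually_ge_atTop 1] with n hn hn1
    rw [Real.norm_of_nonneg (Finset.sum_nonneg fun k _ => hw k), Real.norm_of_nonneg hn.le]
    have := hM n hn1
    rw [inv_mul_le_iff₀ hn, aux_sum_Icc] at this
    have e : ∑ k ∈ Finset.range n, η (k + 1) * (1 + v (k + 1))
        = H n + ∑ k ∈ Finset.range n, η (k + 1) * v (k + 1) := by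
      rw [hH, aux_sum_Icc, ← Finset.sum_add_distrib]
      exact Finset.sum_congr rfl fun k _ => by ring
    rw [e]; linarith
  have h4 := (h2.trans_isBigO h3).tendsto_div_nhds_zero
  refine h4.congr fun n => ?_
  rw [aux_sum_Icc, div_eq_inv_mul]
  congr 1
  exact Finset.sum_congr rfl fun k _ => by ring

/-- the deterministic key lemma for the identification of limits.  With
`Λ(x,γ) := Σ_{i=1}^q g_i(x) 𝔼̃[Λ̃_i(x,γ,·)]`, where each coordinate of `Λ̃` satisfies
either condition (I) or condition (II), and a sequence `(x̄_n)` along which the weighted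
averages of each `g_i` stay bounded, one has
`(1/H_n) Σ_{k=1}^n η_k Λ(x̄_{k−1},γ_k) → 0`. -/
theorem stmt_4
    {E : Type*} [MeasurableSpace E] [MetricSpace E] [TopologicalSpace.SeparableSpace E]
    [LocallyCompactSpace E] [BorelSpace E]
    (q : ℕ)
    (g : E → Fin q → ℝ) (hgmeas : ∀ i, Measurable (fun x => g x i))
    (hgpos : ∀ x i, 0 ≤ g x i)
    (hgloc : ∀ K : Set E, IsCompact K → ∃ C : ℝ, ∀ x ∈ K, ∀ i, g x i ≤ C)
    (γbar : ℝ) (hγbar : 0 < γbar)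
    {Ωt : Type*} [MeasurableSpace Ωt] (Pt : Measure Ωt) [IsProbabilityMeasure Pt]
    (Λt : E → ℝ → Ωt → Fin q → ℝ)
    (hΛmeas : ∀ i, Measurable (fun p : E × ℝ × Ωt => Λt p.1 p.2.1 p.2.2 i))
    (hΛpos : ∀ x c ωt i, 0 ≤ Λt x c ωt i)
    -- 𝔼̃[sup_x sup_γ Λ̃_i] < ∞, via an integrable envelope
    (S : Ωt → ℝ) (hSint : Integrable S Pt)
    (hSenv : ∀ᵐ ωt ∂Pt, ∀ (i : Fin q) (x : E), ∀ c ∈ Set.Ioc (0 : ℝ) γbar, Λt x c ωt i ≤ S ωt)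
    -- each coordinate satisfies condition (I) or condition (II)
    (hIorII : ∀ i : Fin q,
      (∀ᵐ ωt ∂Pt,
        (∀ K : Set E, IsCompact K → ∀ ε : ℝ, 0 < ε → ∃ δ : ℝ, 0 < δ ∧
          ∀ c ∈ Set.Ioc (0 : ℝ) γbar, c < δ → ∀ x ∈ K, Λt x c ωt i ≤ ε)
        ∧ (∃ γlow : ℝ, γlow ∈ Set.Ioc (0 : ℝ) γbar ∧ ∀ ε : ℝ, 0 < ε →
            ∃ K : Set E, IsCompact K ∧ ∀ x ∉ K,
              ∀ c ∈ Set.Ioc (0 : ℝ) γlow, Λt x c ωt i ≤ ε))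
      ∨ (∀ᵐ ωt ∂Pt, ∀ ε : ℝ, 0 < ε → ∃ δ : ℝ, 0 < δ ∧
          ∀ c ∈ Set.Ioc (0 : ℝ) γbar, c < δ → ∀ x : E, Λt x c ωt i * g x i ≤ ε))
    -- the sequences
    (γ η H : ℕ → ℝ)
    (hγ : ∀ n, 1 ≤ n → γ n ∈ Set.Ioc (0 : ℝ) γbar)
    (hγlim : Tendsto γ atTop (nhds 0))
    (hη : ∀ n, 1 ≤ n → 0 ≤ η n)
    (hH : ∀ n, H n = ∑ k ∈ Finset.Icc 1 n, η k)
    (hHlim : Tendsto H atTop atTop)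
    (xb : ℕ → E)
    (hxb : ∀ i : Fin q, ∃ M : ℝ, ∀ n, 1 ≤ n →
      (H n)⁻¹ * ∑ k ∈ Finset.Icc 1 n, η k * g (xb (k - 1)) i ≤ M) :
    Tendsto (fun n => (H n)⁻¹ * ∑ k ∈ Finset.Icc 1 n, η k *
        ∑ i, g (xb (k - 1)) i * ∫ ωt, Λt (xb (k - 1)) (γ k) ωt i ∂Pt)
      atTop (nhds 0) := by
  have key : ∀ i : Fin q, Tendsto (fun n => (H n)⁻¹ * ∑ k ∈ Finset.Icc 1 n, η k *
      (g (xb (k - 1)) i * ∫ ωt, Λt (xb (k - 1)) (γ k) ωt i ∂Pt)) atTop (nhds 0) := by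
    intro i
    have hu : ∀ᵐ ωt ∂Pt, ∀ ε : ℝ, 0 < ε → ∃ δ : ℝ, 0 < δ ∧
        ∀ c ∈ Set.Ioc (0 : ℝ) γbar, c < δ → ∀ x : E,
          g x i / (1 + g x i) * Λt x c ωt i ≤ ε := by
      rcases hIorII i with h | h
      · filter_upwards [h] with ω hω ε hε
        obtain ⟨hi, γl, hγl, hii⟩ := hω
        obtain ⟨K, hK, hKb⟩ := hii ε hε
        obtain ⟨δ, hδ, hδb⟩ := hi K hK ε hε
        refine ⟨min δ γl, lt_min hδ hγl.1, fun c hc hcl x => ?_⟩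
        have hle : Λt x c ω i ≤ ε := by
          by_cases hx : x ∈ K
          · exact hδb c hc (hcl.trans_le (min_le_left _ _)) x hx
          · exact hKb x hx c ⟨hc.1, (hcl.trans_le (min_le_right _ _)).le⟩
        have hg1 : g x i / (1 + g x i) ≤ 1 := by
          rw [div_le_one (by linarith [hgpos x i])]; linarith
        exact (mul_le_of_le_one_left (hΛpos _ _ _ _) hg1).trans hle
      · filter_upwards [h] with ω hω ε hε
        obtain ⟨δ, hδ, hδb⟩ := hω ε hε
        refine ⟨δ, hδ, fun c hc hcl x => ?_⟩
        have hg1 : g x i / (1 + g x i) ≤ g x i :=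
          div_le_self (hgpos x i) (by linarith [hgpos x i])
        have := mul_le_mul_of_nonneg_right hg1 (hΛpos x c ω i)
        linarith [hδb c hc hcl x, mul_comm (g x i) (Λt x c ω i)]
    have hb : Tendsto (fun k => ∫ ω, g (xb (k - 1)) i / (1 + g (xb (k - 1)) i) *
        Λt (xb (k - 1)) (γ k) ω i ∂Pt) atTop (nhds 0) := by
      have h0 : (0 : ℝ) = ∫ _ω, (0 : ℝ) ∂Pt := by simp
      rw [h0]
      have hnn : ∀ k ω, 0 ≤ g (xb (k - 1)) i / (1 + g (xb (k - 1)) i) *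
        Λt (xb (k - 1)) (γ k) ω i := fun k ω =>
        mul_nonneg (div_nonneg (hgpos _ _) (by linarith [hgpos (xb (k - 1)) i])) (hΛpos _ _ _ _)
      refine tendsto_integral_filter_of_dominated_convergence S ?_ ?_ hSint ?_
      · refine Eventually.of_forall fun k => Measurable.aestronglyMeasurable ?_
        refine Measurable.const_mul ?_ _
        exact (hΛmeas i).comp (measurable_const.prodMk (measurable_const.prodMk measurable_id))
      · filter_upwards [eventually_ge_atTop 1] with k hk
        filter_upwards [hSenv] with ω hω
        rw [Real.norm_of_nonneg (hnn k ω)]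
        refine (mul_le_of_le_one_left (hΛpos _ _ _ _) ?_).trans (hω i _ _ (hγ k hk))
        rw [div_le_one (by linarith [hgpos (xb (k - 1)) i])]; linarith
      · filter_upwards [hu] with ω hω
        rw [Metric.tendsto_nhds]
        intro ε hε
        obtain ⟨δ, hδ, hδb⟩ := hω (ε / 2) (by linarith)
        filter_upwards [eventually_ge_atTop 1, hγlim.eventually_lt_const hδ] with k hk hkδ
        rw [Real.dist_eq, sub_zero, abs_of_nonneg (hnn k ω)]
        linarith [hδb _ (hγ k hk) hkδ (xb (k - 1))]
    refine (aux_avg η H (fun k => g (xb (k - 1)) i) _ hη hH hHlim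
      (fun k => hgpos _ _) (hxb i) hb).congr fun n => ?_
    congr 1
    refine Finset.sum_congr rfl fun k _ => ?_
    have : 1 + g (xb (k - 1)) i ≠ 0 := by
      have := hgpos (xb (k - 1)) i
      positivity
    rw [integral_const_mul]
    field_simp
  have hs := tendsto_finsetSum Finset.univ fun i _ => key i
  simp only [Finset.sum_const_zero] at hs
  refine hs.congr fun n => ?_
  rw [← Finset.mul_sum, Finset.sum_comm]
  congr 1
  exact Finset.sum_congr rfl fun k _ => by rw [Finset.mul_sum]
end

section
/- Under the abstract setting, let v_* > 0, V : E → [v_*,∞) Borel, ψ : [v_*,∞) → (0,∞) Borel and locally bounded, α > 0 and β ∈ ℝ. Assume the strongly mean-reverting recursive control holds: there is n₀ ∈ ℕ such that for every n ≥ n₀ and every x ∈ E, Ã_{γ_n}(ψ∘V)(x) ≤ (ψ(V(x))/V(x))(β − α V(x)). Assume also that 𝔼[ψ(V(X_n))] < ∞ for every n. Then sup_{n≥0} 𝔼[ψ(V(X_n))] < +∞. -/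
open MeasureTheory ProbabilityTheory Filter Set

/-- under the abstract setting, the strongly mean-reverting recursive control
`Ã_{γ_n}(ψ∘V)(x) ≤ (ψ(V(x))/V(x))(β − α V(x))` (for `n ≥ n₀`) together with
`𝔼[ψ(V(X_n))] < ∞` for every `n` implies `sup_n 𝔼[ψ(V(X_n))] < ∞`. -/
theorem stmt_5
    {E : Type*} [MeasurableSpace E] [MetricSpace E] [TopologicalSpace.SeparableSpace E]
    [LocallyCompactSpace E] [BorelSpace E]
    {Ω : Type*} {m0 : MeasurableSpace Ω} {P : Measure Ω} [IsProbabilityMeasure P]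
    (ℱ : Filtration ℕ m0)
    (γbar : ℝ) (hγbar : 0 < γbar) (γ : ℕ → ℝ)
    (hγ : ∀ n, 1 ≤ n → γ n ∈ Set.Ioc (0 : ℝ) γbar)
    (hγlim : Tendsto γ atTop (nhds 0))
    (hΓlim : Tendsto (fun n => ∑ k ∈ Finset.Icc 1 n, γ k) atTop atTop)
    (Q : ℝ → Kernel E E) [∀ c, IsMarkovKernel (Q c)]
    (X : ℕ → Ω → E)
    (hXad : ∀ n, Measurable[ℱ n] (X n))
    (hMarkov : ∀ (n : ℕ) (f : E → ℝ), Measurable f →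
      Integrable (fun ω => f (X (n + 1) ω)) P →
      P[(fun ω => f (X (n + 1) ω)) | ℱ n]
        =ᵐ[P] fun ω => ∫ y, f y ∂(Q (γ (n + 1)) (X n ω)))
    -- data of the statement
    (vstar α β : ℝ) (hv : 0 < vstar) (hα : 0 < α)
    (V : E → ℝ) (hVmeas : Measurable V) (hVlb : ∀ x, vstar ≤ V x)
    (ψ : ℝ → ℝ) (hψmeas : Measurable ψ) (hψpos : ∀ y, vstar ≤ y → 0 < ψ y)
    (hψloc : ∀ M, ∃ Cloc, ∀ y ∈ Set.Icc vstar M, ψ y ≤ Cloc)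
    (hQint : ∀ c ∈ Set.Ioc (0 : ℝ) γbar, ∀ x : E,
      Integrable (fun y => ψ (V y)) (Q c x))
    -- strongly mean-reverting recursive control
    (n₀ : ℕ) (hRC : ∀ n, n₀ ≤ n → 1 ≤ n → ∀ x : E,
      ((∫ y, ψ (V y) ∂(Q (γ n) x)) - ψ (V x)) / γ n
        ≤ (ψ (V x) / V x) * (β - α * V x))
    (hint : ∀ n, Integrable (fun ω => ψ (V (X n ω))) P) :
    ∃ M : ℝ, ∀ n, ∫ ω, ψ (V (X n ω)) ∂P ≤ M := by
  obtain ⟨C, hC⟩ := hψloc (2 * |β| / α)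
  set D : ℝ := |C| * (|β| / vstar) with hD
  have hD0 : 0 ≤ D := by positivity
  have hpt : ∀ x : E, (ψ (V x) / V x) * (β - α * V x) ≤ -(α / 2) * ψ (V x) + D := by
    intro x
    have hVx := hVlb x
    have hVp : 0 < V x := lt_of_lt_of_le hv hVx
    have hp := hψpos _ hVx
    have e : (ψ (V x) / V x) * (β - α * V x) = ψ (V x) * (β / V x) - α * ψ (V x) := by
      field_simp
    rw [e]
    rcases le_total (V x) (2 * |β| / α) with h | h
    · have h1 : ψ (V x) ≤ |C| := (hC _ ⟨hVx, h⟩).trans (le_abs_self C)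
      have h2 : β / V x ≤ |β| / vstar :=
        (div_le_div_of_nonneg_right (le_abs_self β) hVp.le).trans
          (div_le_div_of_nonneg_left (abs_nonneg β) hv hVx)
      have h3 : ψ (V x) * (β / V x) ≤ D :=
        (mul_le_mul_of_nonneg_left h2 hp.le).trans
          (mul_le_mul_of_nonneg_right h1 (by positivity))
      have h4 : 0 < α * ψ (V x) := mul_pos hα hp
      linarith
    · have h1 : β / V x ≤ α / 2 := by
        rw [div_le_iff₀ hVp]
        rw [div_le_iff₀ hα] at h
        have := le_abs_self β
        linarith
      have h3 := mul_le_mul_of_nonneg_left h1 hp.le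
      linarith
  have hu0 : ∀ n, 0 ≤ ∫ ω, ψ (V (X n ω)) ∂P := fun n =>
    integral_nonneg fun ω => (hψpos _ (hVlb _)).le
  have hstep : ∀ n, n₀ ≤ n + 1 → ∫ ω, ψ (V (X (n + 1) ω)) ∂P
      ≤ (1 - α / 2 * γ (n + 1)) * (∫ ω, ψ (V (X n ω)) ∂P) + γ (n + 1) * D := by
    intro n hn
    have hg := (hγ (n + 1) (by omega)).1
    have hm := hMarkov n (fun x => ψ (V x)) (hψmeas.comp hVmeas) (hint (n + 1))
    have hI : Integrable (fun ω => ∫ y, ψ (V y) ∂(Q (γ (n + 1)) (X n ω))) P :=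
      integrable_condExp.congr hm
    have h1 : ∫ ω, ψ (V (X (n + 1) ω)) ∂P
        = ∫ ω, ∫ y, ψ (V y) ∂(Q (γ (n + 1)) (X n ω)) ∂P := by
      rw [← integral_condExp (ℱ.le n)]
      exact integral_congr_ae hm
    rw [h1]
    have h2 : ∫ ω, ((1 - α / 2 * γ (n + 1)) * ψ (V (X n ω)) + γ (n + 1) * D) ∂P
        = (1 - α / 2 * γ (n + 1)) * (∫ ω, ψ (V (X n ω)) ∂P) + γ (n + 1) * D := by
      rw [integral_add ((hint n).const_mul _) (integrable_const _), integral_const_mul]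
      simp
    rw [← h2]
    refine integral_mono hI (((hint n).const_mul _).add (integrable_const _)) fun ω => ?_
    have h3 := (hRC (n + 1) hn (by omega) (X n ω)).trans (hpt (X n ω))
    rw [div_le_iff₀ hg] at h3
    show (∫ y, ψ (V y) ∂(Q (γ (n + 1)) (X n ω))) ≤
      (1 - α / 2 * γ (n + 1)) * ψ (V (X n ω)) + γ (n + 1) * D
    linarith
  obtain ⟨N₁, hN₁⟩ := eventually_atTop.1
    (hγlim.eventually (ge_mem_nhds (show (0 : ℝ) < 2 / α by positivity)))
  set N := max n₀ N₁ with hN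
  have hsum : ∀ n, n ≤ N → ∫ ω, ψ (V (X n ω)) ∂P
      ≤ ∑ i ∈ Finset.range (N + 1), ∫ ω, ψ (V (X i ω)) ∂P := fun n hn =>
    Finset.single_le_sum (f := fun i => ∫ ω, ψ (V (X i ω)) ∂P) (fun i _ => hu0 i)
      (Finset.mem_range.2 (by omega))
  have hS0 := (hu0 0).trans (hsum 0 (Nat.zero_le _))
  set S := ∑ i ∈ Finset.range (N + 1), ∫ ω, ψ (V (X i ω)) ∂P with hS
  have hDa : 0 ≤ 2 * D / α := by positivity
  refine ⟨2 * D / α + S, fun n => ?_⟩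
  rcases le_total n N with h | h
  · have := hsum n h
    linarith
  · induction n, h using Nat.le_induction with
    | base =>
      have := hsum N le_rfl
      linarith
    | succ n hn ih =>
      have h1 := hstep n (by omega)
      have h2 := hN₁ (n + 1) (by omega)
      have hg := (hγ (n + 1) (by omega)).1
      rw [le_div_iff₀ hα] at h2
      have h3 : 0 ≤ 1 - α / 2 * γ (n + 1) := by linarith
      have h4 := mul_le_mul_of_nonneg_left ih h3
      have h5 : α / 2 * γ (n + 1) * (2 * D / α) = γ (n + 1) * D := by field_simp
      have h6 : 0 ≤ α / 2 * γ (n + 1) * S := by positivity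
      linarith
end

section
/- Under the abstract setting, let v_* > 0, V : E → [v_*,∞) Borel, ψ, φ : [v_*,∞) → (0,∞) Borel and locally bounded, α > 0 and β ∈ ℝ, and let (θ_n)_{n≥1} be a non-increasing sequence of positive numbers with Σ_{n≥1} θ_n γ_n < ∞. Assume the recursive control RC(ψ,φ,α,β): there is n₀ such that for every n ≥ n₀ and every x ∈ E, Ã_{γ_n}(ψ∘V)(x) ≤ (ψ(V(x))/V(x))(β − α φ(V(x))), and liminf_{y→∞} φ(y) > β/α. Assume also 𝔼[ψ(V(X_n))] < ∞ for every n. Then Σ_{n=1}^{∞} θ_n γ_n 𝔼[ Ṽ_{ψ,φ,1}(X_{n−1}) ] < +∞, where Ṽ_{ψ,φ,1}(x) := φ(V(x)) ψ(V(x)) / V(x). -/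
open MeasureTheory ProbabilityTheory Filter Set

theorem aux_summable (a b θ γ : ℕ → ℝ) (C ε : ℝ) (N : ℕ) (hN : 1 ≤ N)
    (hε : 0 < ε) (ha : ∀ n, 0 ≤ a n) (hb : ∀ n, 0 ≤ b n)
    (hγ : ∀ n, 1 ≤ n → 0 < γ n) (hC : 0 ≤ C)
    (hθpos : ∀ n, 1 ≤ n → 0 < θ n) (hθmono : ∀ n, 1 ≤ n → θ (n + 1) ≤ θ n)
    (hθγ : Summable (fun n : ℕ => θ (n + 1) * γ (n + 1)))
    (h : ∀ n, N ≤ n → a (n + 1) ≤ a n + γ (n + 1) * (C - ε * b n)) :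
    Summable (fun n => θ (n + 1) * γ (n + 1) * b n) := by
  rw [← summable_nat_add_iff N]
  have hs := (summable_nat_add_iff N).2 hθγ
  have hnn : ∀ n, 0 ≤ θ (n + N + 1) * γ (n + N + 1) := fun n =>
    (mul_pos (hθpos _ (by omega)) (hγ _ (by omega))).le
  have key : ∀ n, ε * ∑ i ∈ Finset.range n, θ (i + N + 1) * γ (i + N + 1) * b (i + N)
      ≤ θ N * a N - θ (n + N) * a (n + N)
        + C * ∑ i ∈ Finset.range n, θ (i + N + 1) * γ (i + N + 1) := by
    intro n
    induction n with
    | zero => simp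
    | succ n ih =>
      rw [Finset.sum_range_succ, Finset.sum_range_succ]
      have h1 := mul_le_mul_of_nonneg_left (h (n + N) (by omega)) (hθpos (n + N + 1) (by omega)).le
      have h2 := mul_le_mul_of_nonneg_right (hθmono (n + N) (by omega)) (ha (n + N))
      have e : n + 1 + N = n + N + 1 := by omega
      rw [e]
      linarith
  refine summable_of_sum_range_le (c := (θ N * a N + C * ∑' i, θ (i + N + 1) * γ (i + N + 1)) / ε)
    (fun n => mul_nonneg (hnn n) (hb _)) ?_
  intro n
  rw [le_div_iff₀ hε, mul_comm]
  have h3 := hs.sum_le_tsum (Finset.range n) (fun i _ => hnn i)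
  have h4 := mul_le_mul_of_nonneg_left h3 hC
  have h5 : 0 ≤ θ (n + N) * a (n + N) := mul_nonneg (hθpos _ (by omega)).le (ha _)
  have := key n
  linarith

theorem aux_drift (vstar α β : ℝ) (hv : 0 < vstar) (hα : 0 < α)
    (ψ φ : ℝ → ℝ)
    (hψpos : ∀ y, vstar ≤ y → 0 < ψ y) (hφpos : ∀ y, vstar ≤ y → 0 < φ y)
    (hψloc : ∀ M, ∃ Cloc, ∀ y ∈ Set.Icc vstar M, ψ y ≤ Cloc)
    (hliminf : ∃ c : ℝ, β / α < c ∧ ∀ᶠ y in atTop, c ≤ φ y) :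
    ∃ C ε : ℝ, 0 ≤ C ∧ 0 < ε ∧ ∀ y, vstar ≤ y →
      (ψ y / y) * (β - α * φ y) ≤ C - ε * (φ y * ψ y / y) := by
  have e : ∀ y, φ y * ψ y / y = ψ y / y * φ y := fun y => by ring
  rcases lt_or_ge β 0 with hβ | hβ
  · refine ⟨0, α, le_rfl, hα, fun y hy => ?_⟩
    have h1 : 0 < ψ y / y := div_pos (hψpos y hy) (hv.trans_le hy)
    rw [e]
    nlinarith
  · obtain ⟨c, hc, hev⟩ := hliminf
    obtain ⟨M, hM⟩ := eventually_atTop.1 hev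
    obtain ⟨K, hK⟩ := hψloc M
    have hc0 : 0 < c := lt_of_le_of_lt (div_nonneg hβ hα.le) hc
    have hlt : β / c < α := by
      rw [div_lt_iff₀ hα] at hc
      rw [div_lt_iff₀ hc0]; linarith
    have hbc : 0 ≤ β / c := div_nonneg hβ hc0.le
    refine ⟨|K| / vstar * β, α - β / c, by positivity, by linarith, fun y hy => ?_⟩
    have hy0 := hv.trans_le hy
    have h1 : 0 < ψ y / y := div_pos (hψpos y hy) hy0
    have h2 := hφpos y hy
    rw [e]
    have h6 : 0 ≤ |K| / vstar * β := by positivity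
    rcases le_total M y with hMy | hMy
    · have h3 := mul_le_mul_of_nonneg_left (hM y hMy) hbc
      rw [div_mul_cancel₀ _ hc0.ne'] at h3
      have h4 := mul_le_mul_of_nonneg_left h3 h1.le
      linarith
    · have h3 : ψ y / y ≤ |K| / vstar :=
        div_le_div₀ (abs_nonneg _) ((hK y ⟨hy, hMy⟩).trans (le_abs_self _)) hv hy
      have h4 := mul_le_mul_of_nonneg_right h3 hβ
      have h5 : 0 ≤ β / c * (ψ y / y * φ y) := by positivity
      linarith

/-- under the abstract setting, the recursive control `RC(ψ,φ,α,β)` together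
with `𝔼[ψ(V(X_n))] < ∞` for every `n` and a non-increasing positive sequence `(θ_n)` with
`Σ θ_n γ_n < ∞` implies `Σ_{n≥1} θ_n γ_n 𝔼[Ṽ_{ψ,φ,1}(X_{n−1})] < ∞` where
`Ṽ_{ψ,φ,1} = (φ∘V)(ψ∘V)/V` (the expectations of the nonnegative `Ṽ` are in `[0,∞]`). -/
theorem stmt_6
    {E : Type*} [MeasurableSpace E] [MetricSpace E] [TopologicalSpace.SeparableSpace E]
    [LocallyCompactSpace E] [BorelSpace E]
    {Ω : Type*} {m0 : MeasurableSpace Ω} {P : Measure Ω} [IsProbabilityMeasure P]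
    (ℱ : Filtration ℕ m0)
    (γbar : ℝ) (hγbar : 0 < γbar) (γ : ℕ → ℝ)
    (hγ : ∀ n, 1 ≤ n → γ n ∈ Set.Ioc (0 : ℝ) γbar)
    (hγlim : Tendsto γ atTop (nhds 0))
    (hΓlim : Tendsto (fun n => ∑ k ∈ Finset.Icc 1 n, γ k) atTop atTop)
    (Q : ℝ → Kernel E E) [∀ c, IsMarkovKernel (Q c)]
    (X : ℕ → Ω → E)
    (hXad : ∀ n, Measurable[ℱ n] (X n))
    (hMarkov : ∀ (n : ℕ) (f : E → ℝ), Measurable f →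
      Integrable (fun ω => f (X (n + 1) ω)) P →
      P[(fun ω => f (X (n + 1) ω)) | ℱ n]
        =ᵐ[P] fun ω => ∫ y, f y ∂(Q (γ (n + 1)) (X n ω)))
    -- data of the statement
    (vstar α β : ℝ) (hv : 0 < vstar) (hα : 0 < α)
    (V : E → ℝ) (hVmeas : Measurable V) (hVlb : ∀ x, vstar ≤ V x)
    (ψ φ : ℝ → ℝ) (hψmeas : Measurable ψ) (hφmeas : Measurable φ)
    (hψpos : ∀ y, vstar ≤ y → 0 < ψ y) (hφpos : ∀ y, vstar ≤ y → 0 < φ y)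
    (hψloc : ∀ M, ∃ Cloc, ∀ y ∈ Set.Icc vstar M, ψ y ≤ Cloc)
    (hφloc : ∀ M, ∃ Cloc, ∀ y ∈ Set.Icc vstar M, φ y ≤ Cloc)
    (θ : ℕ → ℝ) (hθpos : ∀ n, 1 ≤ n → 0 < θ n)
    (hθmono : ∀ n, 1 ≤ n → θ (n + 1) ≤ θ n)
    (hθγ : Summable (fun n : ℕ => θ (n + 1) * γ (n + 1)))
    (hQint : ∀ c ∈ Set.Ioc (0 : ℝ) γbar, ∀ x : E,
      Integrable (fun y => ψ (V y)) (Q c x))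
    -- recursive control RC(ψ,φ,α,β)
    (n₀ : ℕ) (hRC : ∀ n, n₀ ≤ n → 1 ≤ n → ∀ x : E,
      ((∫ y, ψ (V y) ∂(Q (γ n) x)) - ψ (V x)) / γ n
        ≤ (ψ (V x) / V x) * (β - α * φ (V x)))
    (hliminf : ∃ c : ℝ, β / α < c ∧ ∀ᶠ y in atTop, c ≤ φ y)
    (hint : ∀ n, Integrable (fun ω => ψ (V (X n ω))) P) :
    (∑' n : ℕ, ENNReal.ofReal (θ (n + 1) * γ (n + 1)) *
        ∫⁻ ω, ENNReal.ofReal (φ (V (X n ω)) * ψ (V (X n ω)) / V (X n ω)) ∂P) < ⊤ := by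
  obtain ⟨C, ε, hC, hε, hdrift⟩ :=
    aux_drift vstar α β hv hα ψ φ hψpos hφpos hψloc hliminf
  have hψV : ∀ x, 0 < ψ (V x) := fun x => hψpos _ (hVlb x)
  have hV0 : ∀ x, 0 < V x := fun x => hv.trans_le (hVlb x)
  have hW0 : ∀ x, 0 < φ (V x) * ψ (V x) / V x := fun x =>
    div_pos (mul_pos (hφpos _ (hVlb x)) (hψV x)) (hV0 x)
  have hstep : ∀ n, n₀ ≤ n → 1 ≤ n → ∀ x, (∫ y, ψ (V y) ∂(Q (γ n) x))
      ≤ ψ (V x) + γ n * (C - ε * (φ (V x) * ψ (V x) / V x)) := by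
    intro n h0 h1 x
    have h2 := (hRC n h0 h1 x).trans (hdrift _ (hVlb x))
    rw [div_le_iff₀ (hγ n h1).1] at h2
    linarith
  have hXm : ∀ n, Measurable (X n) := fun n => (hXad n).mono (ℱ.le n) le_rfl
  have hWint : ∀ n, Integrable (fun ω => φ (V (X n ω)) * ψ (V (X n ω)) / V (X n ω)) P := by
    intro n
    have hg := (hγ (n₀ + 1) (by omega)).1
    refine Integrable.mono' (((hint n).add (integrable_const (γ (n₀ + 1) * C))).const_mul
      (1 / (γ (n₀ + 1) * ε))) ?_ (ae_of_all _ fun ω => ?_)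
    · have hm : Measurable (fun x => φ (V x) * ψ (V x) / V x) :=
        ((hφmeas.comp hVmeas).mul (hψmeas.comp hVmeas)).div hVmeas
      exact (hm.comp (hXm n)).aestronglyMeasurable
    · rw [Real.norm_of_nonneg (hW0 _).le, one_div, ← div_eq_inv_mul, le_div_iff₀ (by positivity)]
      have h1 := hstep (n₀ + 1) (by omega) (by omega) (X n ω)
      have h2 : 0 ≤ ∫ y, ψ (V y) ∂(Q (γ (n₀ + 1)) (X n ω)) :=
        integral_nonneg fun y => (hψV y).le
      simp only [Pi.add_apply]
      linarith
  have hsum : Summable (fun n => θ (n + 1) * γ (n + 1) *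
      ∫ ω, φ (V (X n ω)) * ψ (V (X n ω)) / V (X n ω) ∂P) := by
    refine aux_summable (fun n => ∫ ω, ψ (V (X n ω)) ∂P) _ θ γ C ε (n₀ + 1) (by omega) hε
      (fun n => integral_nonneg fun ω => (hψV _).le)
      (fun n => integral_nonneg fun ω => (hW0 _).le) (fun n hn => (hγ n hn).1) hC
      hθpos hθmono hθγ ?_
    intro n hn
    have hM := hMarkov n (fun x => ψ (V x)) (hψmeas.comp hVmeas) (hint (n + 1))
    have h1 : ∫ ω, ψ (V (X (n + 1) ω)) ∂P
        = ∫ ω, (∫ y, ψ (V y) ∂(Q (γ (n + 1)) (X n ω))) ∂P := by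
      rw [← integral_congr_ae hM, integral_condExp (ℱ.le n)]
    have hi : Integrable (fun ω => C - ε * (φ (V (X n ω)) * ψ (V (X n ω)) / V (X n ω))) P :=
      (integrable_const C).sub ((hWint n).const_mul ε)
    have h2 := integral_mono (integrable_condExp.congr hM)
      ((hint n).add (hi.const_mul (γ (n + 1))))
      (fun ω => hstep (n + 1) (by omega) (by omega) (X n ω))
    simp only [Pi.add_apply] at h2
    rw [integral_add (hint n) (hi.const_mul (γ (n + 1))), integral_const_mul,
      integral_sub (integrable_const C) ((hWint n).const_mul ε), integral_const_mul] at h2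
    simp only [integral_const, probReal_univ, smul_eq_mul, one_mul] at h2
    rw [← h1] at h2
    exact h2
  have hθγ0 : ∀ n, 0 ≤ θ (n + 1) * γ (n + 1) := fun n =>
    (mul_pos (hθpos _ (by omega)) (hγ _ (by omega)).1).le
  have hterm : ∀ n, ENNReal.ofReal (θ (n + 1) * γ (n + 1)) *
        ∫⁻ ω, ENNReal.ofReal (φ (V (X n ω)) * ψ (V (X n ω)) / V (X n ω)) ∂P
      = ENNReal.ofReal (θ (n + 1) * γ (n + 1) *
        ∫ ω, φ (V (X n ω)) * ψ (V (X n ω)) / V (X n ω) ∂P) := by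
    intro n
    rw [ENNReal.ofReal_mul (hθγ0 n),
      ofReal_integral_eq_lintegral_ofReal (hWint n) (ae_of_all _ fun ω => (hW0 _).le)]
  simp_rw [hterm]
  rw [← ENNReal.ofReal_tsum_of_nonneg
    (fun n => mul_nonneg (hθγ0 n) (integral_nonneg fun ω => (hW0 _).le)) hsum]
  exact ENNReal.ofReal_lt_top
end

section
/- Let d ∈ ℕ*, let Λ be a real d×d matrix, and let U be a standard Gaussian random vector on ℝ^d (independent N(0,1) coordinates). Set Σ := I_d − 2ΛᵀΛ and assume Σ is positive definite. Then for every h ∈ (0,1) and every v ∈ ℝ^d, 𝔼[ exp( √h ⟨v,U⟩ + h |ΛU|² ) ] ≤ exp( (h/(2(1−h))) |v|² ) · (det Σ)^{−h/2}. -/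
open MeasureTheory ProbabilityTheory Matrix

lemma aux_one_dim (s : ℝ) (hs : 0 < s) :
    ∫ x, Real.exp ((1 - s) / 2 * x ^ 2) ∂(gaussianReal 0 1) = s ^ (-(1:ℝ) / 2) := by
  rw [integral_gaussianReal_eq_integral_smul one_ne_zero]
  have : ∀ x : ℝ, gaussianPDFReal 0 1 x • Real.exp ((1 - s) / 2 * x ^ 2)
      = (Real.sqrt (2 * Real.pi))⁻¹ * Real.exp (-(s / 2) * x ^ 2) := by
    intro x
    simp only [gaussianPDFReal, smul_eq_mul, NNReal.coe_one, mul_one, sub_zero]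
    rw [mul_assoc, ← Real.exp_add]
    congr 2
    ring
  simp_rw [this]
  rw [integral_const_mul, integral_gaussian, ← Real.sqrt_inv, ← Real.sqrt_mul (by positivity)]
  rw [neg_div, Real.rpow_neg hs.le, ← Real.sqrt_eq_rpow, ← Real.sqrt_inv]
  congr 1
  have := Real.pi_pos
  field_simp

lemma aux_lin (d : ℕ) (a : Fin d → ℝ) :
    ∫ x, Real.exp (∑ i, a i * x i) ∂(Measure.pi (fun _ : Fin d => gaussianReal 0 1))
      = Real.exp ((∑ i, a i ^ 2) / 2) := by
  simp_rw [Real.exp_sum]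
  rw [integral_fintype_prod_eq_prod (f := fun i (x : ℝ) => Real.exp (a i * x)), Finset.sum_div,
    Real.exp_sum]
  refine Finset.prod_congr rfl fun i _ => ?_
  have := congrFun (mgf_id_gaussianReal (μ := 0) (v := 1)) (a i)
  simpa [mgf] using this

lemma aux_norm (d : ℕ) (Λ : Matrix (Fin d) (Fin d) ℝ) (y : Fin d → ℝ) :
    ∑ i, (Λ.mulVec y i) ^ 2
      = (y ⬝ᵥ y - y ⬝ᵥ ((1 - (2 : ℝ) • (Λᵀ * Λ)).mulVec y)) / 2 := by
  have : ∑ i, (Λ.mulVec y i) ^ 2 = Λ.mulVec y ⬝ᵥ Λ.mulVec y := by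
    simp [dotProduct, sq]
  rw [this, sub_mulVec, one_mulVec, smul_mulVec, dotProduct_sub, dotProduct_smul,
    ← mulVec_mulVec, dotProduct_mulVec y, vecMul_transpose, smul_eq_mul]
  ring

lemma aux_quad (d : ℕ) (Λ : Matrix (Fin d) (Fin d) ℝ)
    (hpos : (1 - (2 : ℝ) • (Λᵀ * Λ)).PosDef) :
    ∫ x, Real.exp (∑ i, (Λ.mulVec x i) ^ 2) ∂(Measure.pi (fun _ : Fin d => gaussianReal 0 1))
      = ((1 - (2 : ℝ) • (Λᵀ * Λ)).det) ^ (-(1:ℝ) / 2) := by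
  simp_rw [aux_norm d Λ]
  set S := (1 - (2 : ℝ) • (Λᵀ * Λ)) with hS
  have hH := hpos.isHermitian
  set b := hH.eigenvectorBasis with hb
  set s := hH.eigenvalues with hs
  have hspos : ∀ i, 0 < s i := fun i => hpos.eigenvalues_pos i
  have key := (map_pi_eq_stdGaussian (ι := Fin d)).trans (stdGaussian_eq_map_pi_orthonormalBasis b)
  let F : EuclideanSpace ℝ (Fin d) → ℝ := fun z =>
    Real.exp ((z.ofLp ⬝ᵥ z.ofLp - z.ofLp ⬝ᵥ (S.mulVec z.ofLp)) / 2)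
  have hF : Continuous F := by
    unfold F
    simp only [dotProduct, mulVec]
    fun_prop
  have h1 : ∫ z, F z ∂((Measure.pi (fun _ : Fin d => gaussianReal 0 1)).map (WithLp.toLp 2))
      = ∫ x, F (WithLp.toLp 2 x) ∂(Measure.pi (fun _ : Fin d => gaussianReal 0 1)) :=
    integral_map (by fun_prop) hF.aestronglyMeasurable
  rw [key, integral_map (Continuous.aemeasurable (by fun_prop)) hF.aestronglyMeasurable] at h1
  change ∫ x, F (WithLp.toLp 2 x) ∂(Measure.pi (fun _ : Fin d => gaussianReal 0 1)) = _
  rw [← h1]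
  have h2 : ∀ x : Fin d → ℝ, F (∑ i, x i • b i) = ∏ i, Real.exp ((1 - s i) / 2 * x i ^ 2) := by
    intro x
    rw [← Real.exp_sum]
    have hbb : ∀ i j, (b i).ofLp ⬝ᵥ (b j).ofLp = if i = j then 1 else 0 := by
      intro i j
      have := orthonormal_iff_ite.mp b.orthonormal j i
      rw [EuclideanSpace.inner_eq_star_dotProduct] at this
      simpa [eq_comm] using this
    have hSb : ∀ i, S.mulVec (b i).ofLp = s i • (b i).ofLp := fun i => hH.mulVec_eigenvectorBasis i
    have e1 : (∑ i, x i • b i).ofLp = ∑ i, x i • (b i).ofLp := by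
      simp [WithLp.ofLp_sum]
    simp only [F, e1]
    congr 1
    rw [mulVec_sum]
    simp only [mulVec_smul, hSb, sum_dotProduct, dotProduct_sum, smul_dotProduct,
      dotProduct_smul, hbb, smul_eq_mul]
    simp only [mul_ite, mul_one, mul_zero, Finset.sum_ite_eq, Finset.sum_ite_eq', Finset.mem_univ, if_true]
    rw [← Finset.sum_sub_distrib, Finset.sum_div]
    refine Finset.sum_congr rfl fun i _ => ?_
    ring
  simp_rw [h2]
  rw [integral_fintype_prod_eq_prod (f := fun i (x : ℝ) => Real.exp ((1 - s i) / 2 * x ^ 2)),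
    hH.det_eq_prod_eigenvalues]
  simp only [RCLike.ofReal_real_eq_id, id]
  rw [← Real.finsetProd_rpow _ _ (fun i _ => (hspos i).le)]
  exact Finset.prod_congr rfl fun i _ => aux_one_dim _ (hspos i)

/-- If `Λ` is a real `d×d` matrix, `U` a standard Gaussian random vector on
`ℝ^d` (independent `N(0,1)` coordinates), and `Σ := I_d − 2ΛᵀΛ` is positive definite, then
for every `h ∈ (0,1)` and every `v ∈ ℝ^d`,
`𝔼[exp(√h ⟨v,U⟩ + h |ΛU|²)] ≤ exp((h/(2(1−h))) |v|²) (det Σ)^{−h/2}`. -/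
theorem stmt_9 (d : ℕ) (hd : 0 < d)
    {Ω : Type*} [MeasurableSpace Ω] (P : Measure Ω) [IsProbabilityMeasure P]
    (U : Ω → (Fin d → ℝ)) (hUmeas : Measurable U)
    (hUlaw : Measure.map U P = Measure.pi (fun _ : Fin d => gaussianReal 0 1))
    (Λ : Matrix (Fin d) (Fin d) ℝ)
    (hpos : (1 - (2 : ℝ) • (Λᵀ * Λ)).PosDef)
    (h : ℝ) (hh : h ∈ Set.Ioo (0 : ℝ) 1) (v : Fin d → ℝ) :
    ∫ ω, Real.exp (Real.sqrt h * (∑ i, v i * U ω i) + h * ∑ i, (Λ.mulVec (U ω) i) ^ 2) ∂P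
      ≤ Real.exp ((h / (2 * (1 - h))) * ∑ i, (v i) ^ 2)
        * ((1 - (2 : ℝ) • (Λᵀ * Λ)).det) ^ (-h / 2) := by
  obtain ⟨h0, h1⟩ := hh
  have h1' : 0 < 1 - h := by linarith
  have hdet := hpos.det_pos
  have cont1 : Continuous fun x : Fin d → ℝ => ∑ i, v i * x i := by fun_prop
  have cont2 : Continuous fun x : Fin d → ℝ => ∑ i, (Λ.mulVec x i) ^ 2 := by
    simp only [dotProduct, mulVec]
    fun_prop
  have step : ∫ ω, Real.exp (Real.sqrt h * (∑ i, v i * U ω i)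
        + h * ∑ i, (Λ.mulVec (U ω) i) ^ 2) ∂P
      = ∫ x, Real.exp (Real.sqrt h * (∑ i, v i * x i)) * Real.exp (h * ∑ i, (Λ.mulVec x i) ^ 2)
        ∂(Measure.pi (fun _ : Fin d => gaussianReal 0 1)) := by
    rw [← hUlaw, integral_map hUmeas.aemeasurable]
    · simp_rw [Real.exp_add]
    · exact Continuous.aestronglyMeasurable (by fun_prop)
  rw [step]
  set γ := Measure.pi (fun _ : Fin d => gaussianReal 0 1) with hγ
  set f : (Fin d → ℝ) → ℝ := fun x => Real.exp (Real.sqrt h * (∑ i, v i * x i)) with hf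
  set g : (Fin d → ℝ) → ℝ := fun x => Real.exp (h * ∑ i, (Λ.mulVec x i) ^ 2) with hg
  have hfp : ∀ x, f x ^ (1 / (1 - h))
      = Real.exp (∑ i, (Real.sqrt h / (1 - h) * v i) * x i) := by
    intro x
    rw [hf, ← Real.exp_mul]
    congr 1
    simp_rw [mul_assoc]
    rw [← Finset.mul_sum]
    ring
  have hgp : ∀ x, g x ^ (1 / h) = Real.exp (∑ i, (Λ.mulVec x i) ^ 2) := by
    intro x
    rw [hg, ← Real.exp_mul]
    congr 1
    field_simp
  have If : ∫ x, f x ^ (1 / (1 - h)) ∂γ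
      = Real.exp ((∑ i, (Real.sqrt h / (1 - h) * v i) ^ 2) / 2) := by
    simp_rw [hfp]
    exact aux_lin d _
  have Ig : ∫ x, g x ^ (1 / h) ∂γ = ((1 - (2 : ℝ) • (Λᵀ * Λ)).det) ^ (-(1:ℝ) / 2) := by
    simp_rw [hgp]
    exact aux_quad d Λ hpos
  have hmem : ∀ (k : (Fin d → ℝ) → ℝ) (p : ℝ), 0 < p → Continuous k → (∀ x, 0 ≤ k x) →
      0 < ∫ x, k x ^ p ∂γ → MemLp k (ENNReal.ofReal p) γ := by
    intro k p hp hk hk0 hi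
    rw [← integrable_norm_rpow_iff hk.aestronglyMeasurable (by simpa using hp) (by simp),
      ENNReal.toReal_ofReal hp.le]
    simp_rw [Real.norm_of_nonneg (hk0 _)]
    exact not_imp_comm.1 integral_undef hi.ne'
  have hpq : (1 / (1 - h)).HolderConjugate (1 / h) :=
    ⟨by field_simp; ring, by positivity, by positivity⟩
  have hol := integral_mul_le_Lp_mul_Lq_of_nonneg (μ := γ) hpq (f := f) (g := g)
    (ae_of_all _ fun _ => Real.exp_nonneg _) (ae_of_all _ fun _ => Real.exp_nonneg _)
    (hmem f _ (by positivity) (by fun_prop) (fun _ => Real.exp_nonneg _)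
      (by rw [If]; positivity))
    (hmem g _ (by positivity) (by fun_prop) (fun _ => Real.exp_nonneg _)
      (by rw [Ig]; positivity))
  refine hol.trans_eq ?_
  rw [If, Ig, one_div_one_div, one_div_one_div, ← Real.exp_mul, ← Real.rpow_mul hdet.le]
  congr 2
  · simp_rw [mul_pow]
    rw [← Finset.mul_sum, div_pow, Real.sq_sqrt h0.le]
    field_simp
  · ring
end

section
/- Let E be a measurable space, Q a Markov transition kernel on E, γ > 0, s ≥ 1, v_* > 0, V : E → [v_*,∞) Borel, ψ, φ : [v_*,∞) → (0,∞) Borel, α > 0 and β ∈ ℝ. Assume that for every x ∈ E, Q(ψ∘V)(x) ≤ ψ(V(x)) + γ (ψ(V(x))/V(x)) (β − α φ(V(x))). Then for every x ∈ E, Q((ψ∘V)^{1/s})(x) ≤ (ψ(V(x)))^{1/s} ( 1 + (γ/(s V(x))) (β − α φ(V(x))) ); equivalently, with Ã_γ f := (Q f − f)/γ, Ã_γ((ψ∘V)^{1/s})(x) ≤ ( (ψ(V(x)))^{1/s} / (s V(x)) ) ( β − α φ(V(x)) ). -/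
open MeasureTheory ProbabilityTheory

/-- Jensen step: if a Markov kernel `Q` on `E` satisfies, for some `γ > 0`,
`Q(ψ∘V)(x) ≤ ψ(V(x)) + γ (ψ(V(x))/V(x))(β − α φ(V(x)))` for every `x`, then for every
`s ≥ 1` and every `x`,
`Q((ψ∘V)^{1/s})(x) ≤ (ψ(V(x)))^{1/s} (1 + (γ/(s V(x))) (β − α φ(V(x))))`; equivalently,
with `Ã_γ f := (Qf − f)/γ`,
`Ã_γ((ψ∘V)^{1/s})(x) ≤ ((ψ(V(x)))^{1/s}/(s V(x))) (β − α φ(V(x)))`.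
Integrals of nonnegative functions against the kernel are taken in `[0,∞]`. -/
theorem stmt_15 {E : Type*} [MeasurableSpace E]
    (Q : Kernel E E) [IsMarkovKernel Q]
    (γ s vstar α β : ℝ) (hγ : 0 < γ) (hs : 1 ≤ s) (hv : 0 < vstar) (hα : 0 < α)
    (V : E → ℝ) (hVmeas : Measurable V) (hVlb : ∀ x, vstar ≤ V x)
    (ψ φ : ℝ → ℝ) (hψmeas : Measurable ψ) (hφmeas : Measurable φ)
    (hψpos : ∀ y, vstar ≤ y → 0 < ψ y) (hφpos : ∀ y, vstar ≤ y → 0 < φ y)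
    (hyp : ∀ x, ∫⁻ y, ENNReal.ofReal (ψ (V y)) ∂(Q x)
      ≤ ENNReal.ofReal (ψ (V x) + γ * (ψ (V x) / V x) * (β - α * φ (V x)))) :
    ∀ x, (∫⁻ y, ENNReal.ofReal ((ψ (V y)) ^ (1 / s)) ∂(Q x)
        ≤ ENNReal.ofReal ((ψ (V x)) ^ (1 / s) * (1 + (γ / (s * V x)) * (β - α * φ (V x)))))
      ∧ ((∫⁻ y, ENNReal.ofReal ((ψ (V y)) ^ (1 / s)) ∂(Q x)).toReal - (ψ (V x)) ^ (1 / s)) / γ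
          ≤ ((ψ (V x)) ^ (1 / s) / (s * V x)) * (β - α * φ (V x)) := by
  intro x
  have hs0 : 0 < s := by linarith
  have hVx : 0 < V x := lt_of_lt_of_le hv (hVlb x)
  have ha : 0 < ψ (V x) := hψpos _ (hVlb x)
  have hp0 : 0 ≤ 1 / s := by positivity
  have hp1 : 1 / s ≤ 1 := by rw [div_le_one hs0]; exact hs
  have hsp : s * V x ≠ 0 := by positivity
  have hE : γ / (s * V x) * (β - α * φ (V x))
      = (1 / s) * (γ / V x * (β - α * φ (V x))) := by field_simp
  have hH : ψ (V x) + γ * (ψ (V x) / V x) * (β - α * φ (V x))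
      = ψ (V x) * (1 + γ / V x * (β - α * φ (V x))) := by field_simp
  have hx := hyp x
  have hmeas : Measurable fun y => ENNReal.ofReal (ψ (V y)) :=
    (hψmeas.comp hVmeas).ennreal_ofReal
  have hpos : 0 < ∫⁻ y, ENNReal.ofReal (ψ (V y)) ∂(Q x) := by
    rw [lintegral_pos_iff_support hmeas]
    have : (Function.support fun y => ENNReal.ofReal (ψ (V y))) = Set.univ := by
      ext y
      simpa using hψpos _ (hVlb y)
    rw [this]
    simp
  have hR := ENNReal.ofReal_pos.1 (lt_of_lt_of_le hpos hx)
  rw [hH] at hx hR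
  rw [hE]
  set t := γ / V x * (β - α * φ (V x)) with ht
  set a := ψ (V x) with haa
  set p := 1 / s with hp
  have h1t : 0 < 1 + t := pos_of_mul_pos_right hR ha.le
  have hap : 0 < a ^ p := Real.rpow_pos_of_pos ha _
  have hpt : 0 ≤ a ^ p * (1 + p * t) := by
    apply mul_nonneg hap.le
    nlinarith
  have key : ∀ u : ℝ, 0 < u → u ^ p ≤ a ^ p * (1 - p) + a ^ p * p / a * u := by
    intro u hu
    have h := rpow_one_add_le_one_add_mul_self (s := u / a - 1)
      (by have := div_pos hu ha; linarith) hp0 hp1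
    have e : u ^ p = a ^ p * (1 + (u / a - 1)) ^ p := by
      rw [← Real.mul_rpow ha.le (by have := div_pos hu ha; linarith)]
      congr 1
      field_simp
      ring
    rw [e]
    calc _ ≤ a ^ p * (1 + p * (u / a - 1)) := mul_le_mul_of_nonneg_left h hap.le
      _ = _ := by ring
  have main : ∫⁻ y, ENNReal.ofReal ((ψ (V y)) ^ p) ∂(Q x)
      ≤ ENNReal.ofReal (a ^ p * (1 + p * t)) := by
    have hc1 : 0 ≤ a ^ p * (1 - p) := mul_nonneg hap.le (by linarith)
    have hc2 : 0 ≤ a ^ p * p / a := by positivity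
    calc ∫⁻ y, ENNReal.ofReal ((ψ (V y)) ^ p) ∂(Q x)
        ≤ ∫⁻ y, (ENNReal.ofReal (a ^ p * (1 - p))
            + ENNReal.ofReal (a ^ p * p / a) * ENNReal.ofReal (ψ (V y))) ∂(Q x) := by
          apply lintegral_mono
          intro y
          have hy := hψpos _ (hVlb y)
          dsimp only
          rw [← ENNReal.ofReal_mul hc2, ← ENNReal.ofReal_add hc1 (by positivity)]
          exact ENNReal.ofReal_le_ofReal (key _ hy)
      _ = ENNReal.ofReal (a ^ p * (1 - p))
            + ENNReal.ofReal (a ^ p * p / a) * ∫⁻ y, ENNReal.ofReal (ψ (V y)) ∂(Q x) := by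
          rw [lintegral_add_left measurable_const, lintegral_const_mul _ hmeas]
          simp
      _ ≤ ENNReal.ofReal (a ^ p * (1 - p))
            + ENNReal.ofReal (a ^ p * p / a) * ENNReal.ofReal (a * (1 + t)) := by gcongr
      _ = _ := by
          rw [← ENNReal.ofReal_mul hc2, ← ENNReal.ofReal_add hc1 (by positivity)]
          congr 1
          field_simp
          ring
  refine ⟨main, ?_⟩
  have h2 := ENNReal.toReal_le_of_le_ofReal hpt main
  rw [div_le_iff₀ hγ]
  have e2 : a ^ p / (s * V x) * (β - α * φ (V x)) * γ = a ^ p * (p * t) := by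
    rw [← hE]; ring
  rw [e2]
  linarith
end

section
/- In the Markov switching Euler scheme setting, let ρ ∈ [1,2] and assume sup_n 𝔼|U_n|^ρ < ∞. Let f : ℝ^d × {1,…,M₀} → ℝ be such that for every z ∈ {1,…,M₀}, f(·,z) is twice continuously differentiable with compact support. Then there is a constant C_f > 0 such that for every n, almost surely, 𝔼[ | f(X̄_{n+1}, ζ_{n+1}) − f( X̄_n + γ_{n+1} b(X̄_n,ζ_n), ζ_n ) |^ρ | ℱ_n ] ≤ C_f γ_{n+1}^{ρ/2} max( 1, Tr[σσ*(X̄_n,ζ_n)]^{ρ/2} ). -/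
open MeasureTheory ProbabilityTheory Filter Set Matrix

/-- The action of a `d×d` real matrix on `ℝ^d` viewed as a Euclidean space. -/
noncomputable def mvE {d : ℕ} (A : Matrix (Fin d) (Fin d) ℝ) (v : EuclideanSpace ℝ (Fin d)) :
    EuclideanSpace ℝ (Fin d) :=
  (EuclideanSpace.equiv (Fin d) ℝ).symm (A.mulVec ((EuclideanSpace.equiv (Fin d) ℝ) v))


lemma trace_sq {d : ℕ} (A : Matrix (Fin d) (Fin d) ℝ) :
    Matrix.trace (A * Aᵀ) = ∑ i, ∑ j, A i j ^ 2 := by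
  simp [Matrix.trace, Matrix.mul_apply, sq]

lemma trace_sq_nonneg {d : ℕ} (A : Matrix (Fin d) (Fin d) ℝ) :
    0 ≤ Matrix.trace (A * Aᵀ) := by
  rw [trace_sq]; positivity

lemma mvE_norm_sq_le {d : ℕ} (A : Matrix (Fin d) (Fin d) ℝ) (v : EuclideanSpace ℝ (Fin d)) :
    ‖mvE A v‖ ^ 2 ≤ Matrix.trace (A * Aᵀ) * ‖v‖ ^ 2 := by
  rw [EuclideanSpace.real_norm_sq_eq, EuclideanSpace.real_norm_sq_eq, trace_sq, Finset.sum_mul]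
  apply Finset.sum_le_sum
  intro i _
  have h : (mvE A v) i = ∑ j, A i j * v j := by
    simp [mvE, Matrix.mulVec, dotProduct]
  rw [h]
  exact Finset.sum_mul_sq_le_sq_mul_sq _ _ _

lemma step_rpow_le {d : ℕ} (A : Matrix (Fin d) (Fin d) ℝ) (v : EuclideanSpace ℝ (Fin d))
    (g ρ : ℝ) (hg : 0 ≤ g) (hρ : 0 ≤ ρ) :
    ‖Real.sqrt g • mvE A v‖ ^ ρ ≤ g ^ (ρ / 2) * (Matrix.trace (A * Aᵀ)) ^ (ρ / 2) * ‖v‖ ^ ρ := by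
  have ht := trace_sq_nonneg A
  have e : ∀ x : ℝ, 0 ≤ x → x ^ ρ = (x ^ 2) ^ (ρ / 2) := by
    intro x hx
    rw [← Real.rpow_natCast, ← Real.rpow_mul hx]
    congr 1
    push_cast
    ring
  rw [e _ (norm_nonneg _), e _ (norm_nonneg v), ← Real.mul_rpow hg ht,
    ← Real.mul_rpow (by positivity) (by positivity)]
  apply Real.rpow_le_rpow (by positivity) _ (by positivity)
  rw [norm_smul, mul_pow, Real.norm_eq_abs, sq_abs, Real.sq_sqrt hg, mul_assoc]
  exact mul_le_mul_of_nonneg_left (mvE_norm_sq_le A v) hg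

lemma add_rpow_le_two {a b ρ : ℝ} (ha : 0 ≤ a) (hb : 0 ≤ b) (hρ : 0 ≤ ρ) :
    (a + b) ^ ρ ≤ 2 ^ ρ * (a ^ ρ + b ^ ρ) := by
  have h1 : (a + b) ^ ρ ≤ (2 * max a b) ^ ρ := by
    apply Real.rpow_le_rpow (by positivity) _ hρ
    linarith [le_max_left a b, le_max_right a b]
  rw [Real.mul_rpow (by norm_num) (le_max_of_le_left ha)] at h1
  refine h1.trans (mul_le_mul_of_nonneg_left ?_ (by positivity))
  have := Real.rpow_nonneg ha ρ
  have := Real.rpow_nonneg hb ρ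
  rcases max_choice a b with h | h <;> rw [h] <;> linarith

/-- one step of the switching chain, conditionally on `m`. -/
lemma cond_switch {Ω : Type*} {m0 : MeasurableSpace Ω} {P : Measure Ω} [IsProbabilityMeasure P]
    (m m' : MeasurableSpace Ω) (hm : m ≤ m') (hm' : m' ≤ m0)
    (g h : Ω → ℝ) (hh : Measurable[m] h) (hhi : Integrable h P)
    (k : ℝ) (H : ∀ᵐ ω ∂P, |(P[g|m']) ω - h ω| ≤ k) :
    ∀ᵐ ω ∂P, (P[g|m]) ω ≤ h ω + k := by
  have h1 : P[P[g|m']|m] =ᵐ[P] P[g|m] := condExp_condExp_of_le hm hm'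
  have h2 : P[P[g|m']|m] ≤ᵐ[P] P[fun ω => h ω + k|m] := by
    apply condExp_mono integrable_condExp (hhi.add (integrable_const k))
    filter_upwards [H] with ω hω
    have := (abs_le.1 hω).2
    change _ ≤ h ω + k
    linarith
  have h3 : P[fun ω => h ω + k|m] = fun ω => h ω + k :=
    condExp_of_stronglyMeasurable (hm.trans hm')
      ((hh.add measurable_const).stronglyMeasurable) (hhi.add (integrable_const k))
  rw [h3] at h2
  filter_upwards [h1, h2] with ω a b
  rw [← a]; exact b

lemma integrable_norm_rpow {d : ℕ} (hd : 0 < d)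
    {Ω : Type*} {m0 : MeasurableSpace Ω} {P : Measure Ω} [IsProbabilityMeasure P]
    (U : Ω → EuclideanSpace ℝ (Fin d)) (hU : Measurable U)
    (hU2 : ∀ i j : Fin d, ∫ ω, U ω i * U ω j ∂P = if i = j then 1 else 0)
    (ρ : ℝ) (hρ : ρ ∈ Set.Icc (1 : ℝ) 2) : Integrable (fun ω => ‖U ω‖ ^ ρ) P := by
  have h1 : Integrable (fun ω => ‖U ω‖ ^ 2) P := by
    simp_rw [EuclideanSpace.real_norm_sq_eq]
    apply integrable_finsetSum
    intro i _
    by_contra hc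
    have := hU2 i i
    simp_rw [← sq] at this
    rw [integral_undef hc] at this
    simp at this
  refine ((integrable_const (1 : ℝ)).add h1).mono' (hU.norm.pow_const ρ).aestronglyMeasurable ?_
  filter_upwards with ω
  have h0 := norm_nonneg (U ω)
  rw [Real.norm_of_nonneg (by positivity)]
  simp only [Pi.add_apply]
  rcases le_total ‖U ω‖ 1 with h | h
  · have := Real.rpow_le_one h0 h (by linarith [hρ.1] : 0 ≤ ρ)
    nlinarith [sq_nonneg ‖U ω‖]
  · have := Real.rpow_le_rpow_of_exponent_le h hρ.2
    rw [Real.rpow_two] at this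
    linarith

/-- growth control for test functions in the domain, for the Euler scheme
of a Markov switching diffusion: if `f(·,z)` is `C²` with compact support for each `z`
and `sup_n 𝔼|U_n|^ρ < ∞`, then
`𝔼[|f(X̄_{n+1},ζ_{n+1}) − f(X̄_n + γ_{n+1} b(X̄_n,ζ_n), ζ_n)|^ρ | ℱ_n]
  ≤ C_f γ_{n+1}^{ρ/2} max(1, Tr[σσ*(X̄_n,ζ_n)]^{ρ/2})`. -/
theorem stmt_19
    (d M₀ : ℕ) (hd : 0 < d) (hM : 0 < M₀)
    {Ω : Type*} {m0 : MeasurableSpace Ω} {P : Measure Ω} [IsProbabilityMeasure P]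
    (ℱ : Filtration ℕ m0)
    (q : Fin M₀ → Fin M₀ → ℝ)
    (hqpos : ∀ z w, z ≠ w → 0 ≤ q z w) (hqsum : ∀ z, ∑ w, q z w = 0)
    (b : EuclideanSpace ℝ (Fin d) → Fin M₀ → EuclideanSpace ℝ (Fin d))
    (σ : EuclideanSpace ℝ (Fin d) → Fin M₀ → Matrix (Fin d) (Fin d) ℝ)
    (hbmeas : ∀ z, Measurable (fun x => b x z))
    (hσmeas : ∀ (z : Fin M₀) (i j : Fin d), Measurable (fun x => σ x z i j))
    (γbar : ℝ) (hγbar : 0 < γbar) (γ : ℕ → ℝ)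
    (hγ : ∀ n, 1 ≤ n → γ n ∈ Set.Ioc (0 : ℝ) γbar)
    (hγlim : Tendsto γ atTop (nhds 0))
    (hΓlim : Tendsto (fun n => ∑ k ∈ Finset.Icc 1 n, γ k) atTop atTop)
    -- the innovations (U_n): i.i.d., centered, unit covariance, independent of the past
    (U : ℕ → Ω → EuclideanSpace ℝ (Fin d))
    (hUmeas : ∀ n, Measurable (U n))
    (hUid : ∀ n m, Measure.map (U n) P = Measure.map (U m) P)
    (hUindep : ∀ n, Indep (MeasurableSpace.comap (U (n + 1)) inferInstance) (ℱ n) P)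
    (hU1 : ∀ n, ∫ ω, U n ω ∂P = 0)
    (hU2 : ∀ n, ∀ i j : Fin d, ∫ ω, U n ω i * U n ω j ∂P = if i = j then 1 else 0)
    -- the switching chain and the scheme
    (ζ : ℕ → Ω → Fin M₀) (Xb : ℕ → Ω → EuclideanSpace ℝ (Fin d))
    (hXad : ∀ n, Measurable[ℱ n] (Xb n)) (hζad : ∀ n, Measurable[ℱ n] (ζ n))
    (εζ : ℝ → ℝ) (hεζpos : ∀ c, 0 ≤ εζ c)
    (hεζlim : Tendsto εζ (nhdsWithin 0 (Set.Ioi 0)) (nhds 0))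
    (hζtrans : ∀ n, ∀ z : Fin M₀, ∀ᵐ ω ∂P,
      |(P[(fun ω' => if ζ (n + 1) ω' = z then (1 : ℝ) else 0) |
          (ℱ n ⊔ MeasurableSpace.comap (U (n + 1)) inferInstance)]) ω
        - ((if ζ n ω = z then (1 : ℝ) else 0) + γ (n + 1) * q (ζ n ω) z)|
        ≤ γ (n + 1) * εζ (γ (n + 1)))
    (hscheme : ∀ n ω, Xb (n + 1) ω = Xb n ω + γ (n + 1) • b (Xb n ω) (ζ n ω)
      + Real.sqrt (γ (n + 1)) • mvE (σ (Xb n ω) (ζ n ω)) (U (n + 1) ω))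
    -- data of the statement
    (ρ : ℝ) (hρ : ρ ∈ Set.Icc (1 : ℝ) 2)
    (CU : ℝ) (hUmom : ∀ n, ∫ ω, ‖U n ω‖ ^ ρ ∂P ≤ CU)
    (f : EuclideanSpace ℝ (Fin d) → Fin M₀ → ℝ)
    (hf : ∀ z, ContDiff ℝ 2 (fun x => f x z) ∧ HasCompactSupport (fun x => f x z)) :
    ∃ Cf : ℝ, 0 < Cf ∧ ∀ n : ℕ, ∀ᵐ ω ∂P,
      (P[(fun ω' => |f (Xb (n + 1) ω') (ζ (n + 1) ω')
            - f (Xb n ω' + γ (n + 1) • b (Xb n ω') (ζ n ω')) (ζ n ω')| ^ ρ) | ℱ n]) ω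
        ≤ Cf * γ (n + 1) ^ (ρ / 2)
          * max 1 ((Matrix.trace (σ (Xb n ω) (ζ n ω) * (σ (Xb n ω) (ζ n ω))ᵀ)) ^ (ρ / 2)) := by
  classical
  have hρ0 : 0 ≤ ρ := by linarith [hρ.1]
  -- boundedness and Lipschitz constants
  have hK : ∀ z, ∃ C, ∀ x, ‖f x z‖ ≤ C := fun z =>
    (hf z).2.exists_bound_of_continuous (hf z).1.continuous
  choose K0 hK0 using hK
  obtain ⟨K, hKn, hKb⟩ : ∃ K : ℝ, 0 ≤ K ∧ ∀ z x, |f x z| ≤ K := by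
    have h0 : ∀ z, 0 ≤ K0 z := fun z => (norm_nonneg _).trans (hK0 z 0)
    exact ⟨∑ z, K0 z, Finset.sum_nonneg fun z _ => h0 z, fun z x => (hK0 z x).trans
      (Finset.single_le_sum (f := K0) (fun z _ => h0 z) (Finset.mem_univ z))⟩
  have hL : ∀ z, ∃ C, LipschitzWith C (fun x => f x z) := fun z =>
    (hf z).1.lipschitzWith_of_hasCompactSupport (hf z).2 (by norm_num)
  choose L0 hL0 using hL
  obtain ⟨L, hLn, hLb⟩ : ∃ L : ℝ, 0 ≤ L ∧ ∀ z x y, |f x z - f y z| ≤ L * ‖x - y‖ := by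
    refine ⟨∑ z, (L0 z : ℝ), by positivity, fun z x y => ?_⟩
    have h1 := (hL0 z).dist_le_mul x y
    rw [Real.dist_eq, dist_eq_norm] at h1
    refine h1.trans (mul_le_mul_of_nonneg_right ?_ (norm_nonneg _))
    exact Finset.single_le_sum (f := fun z => (L0 z : ℝ)) (fun z _ => (L0 z).2) (Finset.mem_univ z)
  -- bound on q and epsilon
  obtain ⟨Kq, hKq⟩ : ∃ Kq : ℝ, ∀ z w, q z w ≤ Kq := by
    obtain ⟨B, hB⟩ := (Set.finite_range (fun p : Fin M₀ × Fin M₀ => q p.1 p.2)).bddAbove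
    exact ⟨B, fun z w => hB ⟨(z, w), rfl⟩⟩
  obtain ⟨Ke, hKe⟩ : ∃ Ke : ℝ, ∀ n, εζ (γ (n + 1)) ≤ Ke := by
    have ht : Tendsto (fun n => εζ (γ (n + 1))) atTop (nhds 0) := by
      apply hεζlim.comp
      apply tendsto_nhdsWithin_iff.2 ⟨hγlim.comp (tendsto_add_atTop_nat 1), ?_⟩
      exact Eventually.of_forall fun n => (hγ (n + 1) (by omega)).1
    obtain ⟨B, hB⟩ := ht.bddAbove_range
    exact ⟨B, fun n => hB ⟨n, rfl⟩⟩
  set Kt : ℝ := max 0 (Kq + Ke) with hKt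
  have hKt0 : 0 ≤ Kt := le_max_left _ _
  have hCU : 0 ≤ CU := le_trans (integral_nonneg fun ω => by positivity) (hUmom 0)
  set c1 : ℝ := 2 ^ ρ * (2 * K) ^ ρ with hc1
  set c2 : ℝ := 2 ^ ρ * L ^ ρ with hc2
  have hc1n : 0 ≤ c1 := by positivity
  have hc2n : 0 ≤ c2 := by positivity
  refine ⟨1 + c1 * (M₀ * Kt * γbar ^ (1 - ρ / 2)) + c2 * CU, by positivity, fun n => ?_⟩
  obtain ⟨hg0, hgb⟩ := hγ (n + 1) (by omega)
  set g := γ (n + 1) with hg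
  have hle : ℱ n ≤ m0 := ℱ.le n
  set T : Ω → ℝ := fun ω => max 1
    ((Matrix.trace (σ (Xb n ω) (ζ n ω) * (σ (Xb n ω) (ζ n ω))ᵀ)) ^ (ρ / 2)) with hT
  have hT1 : ∀ ω, 1 ≤ T ω := fun ω => le_max_left _ _
  have hdisc : ∀ {β : Type} [MeasurableSpace β] (m : MeasurableSpace Ω)
      (F : EuclideanSpace ℝ (Fin d) → Fin M₀ → β) (X : Ω → EuclideanSpace ℝ (Fin d))
      (Z : Ω → Fin M₀), (∀ z, Measurable (fun x => F x z)) → Measurable[m] X → Measurable[m] Z →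
      Measurable[m] (fun ω => F (X ω) (Z ω)) := by
    intro β _ m F X Z hF hX hZ
    have : Measurable (fun p : EuclideanSpace ℝ (Fin d) × Fin M₀ => F p.1 p.2) :=
      measurable_from_prod_countable_left hF
    exact this.comp (hX.prodMk hZ)
  have hTm : Measurable[ℱ n] T := by
    apply hdisc (ℱ n) (fun x z => max 1 ((Matrix.trace (σ x z * (σ x z)ᵀ)) ^ (ρ / 2))) _ _ _
      (hXad n) (hζad n)
    intro z
    simp_rw [trace_sq]
    have := hσmeas z
    fun_prop
  set Z : Ω → ℝ := fun ω' => |f (Xb (n + 1) ω') (ζ (n + 1) ω')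
            - f (Xb n ω' + g • b (Xb n ω') (ζ n ω')) (ζ n ω')| ^ ρ with hZ
  have hfm : ∀ z, Measurable (fun x => f x z) := fun z => (hf z).1.continuous.measurable
  have hZm : Measurable Z := by
    have h1 : Measurable (fun ω => f (Xb (n + 1) ω) (ζ (n + 1) ω)) :=
      hdisc m0 f _ _ hfm ((hXad (n + 1)).mono (ℱ.le _) le_rfl)
        ((hζad (n + 1)).mono (ℱ.le _) le_rfl)
    have h2 : Measurable (fun ω => f (Xb n ω + g • b (Xb n ω) (ζ n ω)) (ζ n ω)) := by
      refine hdisc m0 (fun x z => f (x + g • b x z) z) _ _ ?_ ((hXad n).mono (ℱ.le _) le_rfl)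
        ((hζad n).mono (ℱ.le _) le_rfl)
      intro z
      exact (hfm z).comp (measurable_id.add ((hbmeas z).const_smul g))
    exact ((h1.sub h2).abs).pow_const ρ
  have hZ0 : ∀ ω, 0 ≤ Z ω := fun ω => by positivity
  have hZi : Integrable Z P := by
    refine (integrable_const ((2 * K) ^ ρ)).mono' hZm.aestronglyMeasurable ?_
    filter_upwards with ω
    rw [Real.norm_of_nonneg (hZ0 ω)]
    apply Real.rpow_le_rpow (abs_nonneg _) _ hρ0
    refine (abs_sub _ _).trans ?_
    linarith [hKb (ζ (n + 1) ω) (Xb (n + 1) ω),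
      hKb (ζ n ω) (Xb n ω + g • b (Xb n ω) (ζ n ω))]
  -- weights
  set W : Ω → ℝ := fun ω => (T ω)⁻¹ with hW
  have hWm : Measurable[ℱ n] W := hTm.inv
  have hW0 : ∀ ω, 0 ≤ W ω := fun ω => inv_nonneg.2 (by linarith [hT1 ω])
  have hW1 : ∀ ω, W ω ≤ 1 := fun ω => inv_le_one_of_one_le₀ (hT1 ω)
  have hWZi : Integrable (W * Z) P := by
    refine hZi.mono' ((hWm.mono hle le_rfl).mul hZm).aestronglyMeasurable ?_
    filter_upwards with ω
    rw [Pi.mul_apply, Real.norm_of_nonneg (mul_nonneg (hW0 ω) (hZ0 ω))]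
    exact mul_le_of_le_one_left (hZ0 ω) (hW1 ω)
  -- the dominating function
  set V : Fin M₀ → Ω → ℝ := fun z ω => if ζ n ω = z then 0 else 1 with hV
  set G : Fin M₀ → Ω → ℝ := fun z ω => if ζ (n + 1) ω = z then 1 else 0 with hG
  have hset : ∀ z, MeasurableSet[ℱ n] {ω | ζ n ω = z} := fun z =>
    (hζad n) (measurableSet_singleton z)
  have hset' : ∀ z, MeasurableSet {ω | ζ (n + 1) ω = z} := fun z =>
    (ℱ.le (n + 1)) _ ((hζad (n + 1)) (measurableSet_singleton z))
  have hVm : ∀ z, Measurable[ℱ n] (V z) := fun z =>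
    Measurable.ite (hset z) measurable_const measurable_const
  have hGm : ∀ z, Measurable (G z) := fun z =>
    Measurable.ite (hset' z) measurable_const measurable_const
  have hGi : ∀ z, Integrable (G z) P := fun z => by
    refine (integrable_const (1 : ℝ)).mono' (hGm z).aestronglyMeasurable ?_
    filter_upwards with ω
    simp only [hG]; split_ifs <;> simp
  have hVGi : ∀ z, Integrable (V z * G z) P := fun z => by
    refine (integrable_const (1 : ℝ)).mono'
      (((hVm z).mono hle le_rfl).mul (hGm z)).aestronglyMeasurable ?_
    filter_upwards with ω
    simp only [hG, hV, Pi.mul_apply]; split_ifs <;> simp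
  set N : Ω → ℝ := fun ω => ‖U (n + 1) ω‖ ^ ρ with hN
  have hNi : Integrable N P :=
    integrable_norm_rpow hd _ (hUmeas (n + 1)) (hU2 (n + 1)) ρ hρ
  have hpt : ∀ ω, (W * Z) ω ≤ (c1 • (∑ z, V z * G z) + (c2 * g ^ (ρ / 2)) • N) ω := by
    intro ω
    have hsum : (∑ z, V z * G z) ω = if ζ (n + 1) ω = ζ n ω then 0 else 1 := by
      simp only [Finset.sum_apply, Pi.mul_apply, hV, hG]
      rw [Finset.sum_eq_single (ζ (n + 1) ω)]
      · simp [eq_comm]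
      · intro z _ hz
        simp [hz.symm]
      · simp
    simp only [Pi.add_apply, Pi.smul_apply, smul_eq_mul, Pi.mul_apply, hsum]
    set Y := Xb n ω + g • b (Xb n ω) (ζ n ω) with hY
    set A : ℝ := if ζ (n + 1) ω = ζ n ω then 0 else 1 with hA
    have hA0 : 0 ≤ A := by rw [hA]; split_ifs <;> simp
    have hAr : A ^ ρ = A := by
      rw [hA]; split_ifs
      · exact Real.zero_rpow (by linarith [hρ.1])
      · exact Real.one_rpow _
    have h1 : |f (Xb (n + 1) ω) (ζ (n + 1) ω) - f (Xb (n + 1) ω) (ζ n ω)| ≤ 2 * K * A := by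
      rw [hA]; split_ifs with h
      · rw [h]; simp
      · refine (abs_sub _ _).trans ?_
        linarith [hKb (ζ (n + 1) ω) (Xb (n + 1) ω), hKb (ζ n ω) (Xb (n + 1) ω)]
    have h2 := hLb (ζ n ω) (Xb (n + 1) ω) Y
    have h3 : Xb (n + 1) ω - Y = Real.sqrt g • mvE (σ (Xb n ω) (ζ n ω)) (U (n + 1) ω) := by
      rw [hscheme n ω]; exact add_sub_cancel_left _ _
    have h4 := step_rpow_le (σ (Xb n ω) (ζ n ω)) (U (n + 1) ω) g ρ hg0.le hρ0
    rw [← h3] at h4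
    have h5 : Z ω ≤ 2 ^ ρ * ((2 * K * A) ^ ρ + (L * ‖Xb (n + 1) ω - Y‖) ^ ρ) := by
      refine le_trans ?_ (add_rpow_le_two (by positivity) (by positivity) hρ0)
      apply Real.rpow_le_rpow (abs_nonneg _) _ hρ0
      refine (abs_sub_le _ (f (Xb (n + 1) ω) (ζ n ω)) _).trans ?_
      exact add_le_add h1 h2
    rw [Real.mul_rpow (by positivity) hA0, hAr, Real.mul_rpow hLn (norm_nonneg _)] at h5
    have h6 : Z ω ≤ c1 * A + c2 * (g ^ (ρ / 2) * T ω * N ω) := by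
      have h7 : ‖Xb (n + 1) ω - Y‖ ^ ρ ≤ g ^ (ρ / 2) * T ω * N ω := by
        refine h4.trans ?_
        apply mul_le_mul_of_nonneg_right _ (by positivity)
        exact mul_le_mul_of_nonneg_left (le_max_right _ _) (by positivity)
      have h8 := mul_le_mul_of_nonneg_left h7 hc2n
      rw [hc1]
      rw [hc2] at h8 ⊢
      linarith
    have hWT : W ω * T ω = 1 := inv_mul_cancel₀ (by linarith [hT1 ω])
    calc W ω * Z ω ≤ W ω * (c1 * A + c2 * (g ^ (ρ / 2) * T ω * N ω)) :=
          mul_le_mul_of_nonneg_left h6 (hW0 ω)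
      _ = W ω * (c1 * A) + c2 * g ^ (ρ / 2) * N ω * (W ω * T ω) := by ring
      _ ≤ c1 * A + c2 * g ^ (ρ / 2) * N ω := by
          rw [hWT, mul_one]
          have := mul_le_of_le_one_left (mul_nonneg hc1n hA0) (hW1 ω)
          linarith
  -- conditional expectations
  have hSi : Integrable (∑ z, V z * G z) P := integrable_finsetSum' _ fun z _ => hVGi z
  have e1 : P[W * Z|ℱ n] =ᵐ[P] W * P[Z|ℱ n] :=
    condExp_mul_of_stronglyMeasurable_left hWm.stronglyMeasurable hWZi hZi
  have e2 : P[W * Z|ℱ n] ≤ᵐ[P] P[c1 • (∑ z, V z * G z) + (c2 * g ^ (ρ / 2)) • N|ℱ n] :=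
    condExp_mono hWZi ((hSi.smul c1).add (hNi.smul _)) (Eventually.of_forall hpt)
  have e3 := condExp_add (μ := P) (hSi.smul c1) (hNi.smul (c2 * g ^ (ρ / 2))) (ℱ n)
  have e4 := condExp_smul (μ := P) c1 (∑ z, V z * G z) (ℱ n)
  have e5 := condExp_smul (μ := P) (c2 * g ^ (ρ / 2)) N (ℱ n)
  have e6 := condExp_finsetSum (μ := P) (s := Finset.univ) (f := fun z => V z * G z)
    (fun z _ => hVGi z) (ℱ n)
  have e7 : P[N|ℱ n] =ᵐ[P] fun _ => ∫ ω, N ω ∂P := by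
    have hcm : MeasurableSpace.comap (U (n + 1)) inferInstance ≤ m0 := (hUmeas (n + 1)).comap_le
    refine condExp_indep_eq hcm hle ?_ (hUindep n)
    have : Measurable (fun x : EuclideanSpace ℝ (Fin d) => ‖x‖ ^ ρ) := by fun_prop
    exact (this.comp (comap_measurable (U (n + 1)))).stronglyMeasurable
  have e8 : ∀ᵐ ω ∂P, ∀ z, (P[V z * G z|ℱ n]) ω ≤ g * Kt := by
    rw [ae_all_iff]
    intro z
    have a1 : P[V z * G z|ℱ n] =ᵐ[P] V z * P[G z|ℱ n] :=
      condExp_mul_of_stronglyMeasurable_left (hVm z).stronglyMeasurable (hVGi z) (hGi z)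
    have hhm : Measurable[ℱ n] (fun ω => (if ζ n ω = z then (1 : ℝ) else 0) + g * q (ζ n ω) z) := by
      have h1 : Measurable (fun w : Fin M₀ => (if w = z then (1 : ℝ) else 0) + g * q w z) :=
        measurable_of_finite _
      exact h1.comp (hζad n)
    have hhi : Integrable (fun ω => (if ζ n ω = z then (1 : ℝ) else 0) + g * q (ζ n ω) z) P := by
      refine (integrable_const (1 + g * ∑ w, |q w z|)).mono'
        (hhm.mono hle le_rfl).aestronglyMeasurable ?_
      filter_upwards with ω
      refine (norm_add_le _ _).trans (add_le_add ?_ ?_)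
      · split_ifs <;> simp
      · rw [norm_mul, Real.norm_of_nonneg hg0.le]
        apply mul_le_mul_of_nonneg_left _ hg0.le
        exact Finset.single_le_sum (f := fun w => |q w z|) (fun w _ => abs_nonneg _)
          (Finset.mem_univ (ζ n ω))
    have a2 := cond_switch (P := P) (ℱ n)
      (ℱ n ⊔ MeasurableSpace.comap (U (n + 1)) inferInstance) le_sup_left
      (sup_le hle (hUmeas (n + 1)).comap_le) (G z) _ hhm hhi _ (hζtrans n z)
    filter_upwards [a1, a2] with ω b1 b2
    rw [b1, Pi.mul_apply]
    by_cases h : ζ n ω = z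
    · simp only [hV, h, if_true, zero_mul]
      positivity
    · simp only [hV, h, if_false, one_mul]
      simp only [h, if_false, zero_add] at b2
      refine b2.trans ?_
      rw [← hg, ← mul_add]
      apply mul_le_mul_of_nonneg_left _ hg0.le
      exact (add_le_add (hKq _ _) (hKe n)).trans (le_max_right _ _)
  filter_upwards [e1, e2, e3, e4, e5, e6, e7, e8] with ω e1 e2 e3 e4 e5 e6 e7 e8
  rw [e1, e3] at e2
  simp only [Pi.add_apply, Pi.mul_apply, e4, e5, Pi.smul_apply, smul_eq_mul, e6, e7,
    Finset.sum_apply] at e2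
  have s1 : ∑ z, (P[V z * G z|ℱ n]) ω ≤ M₀ * (g * Kt) := by
    refine (Finset.sum_le_sum fun z _ => e8 z).trans ?_
    simp
  have s2 : ∫ ω, N ω ∂P ≤ CU := hUmom (n + 1)
  have s3 : g ≤ g ^ (ρ / 2) * γbar ^ (1 - ρ / 2) := by
    calc g = g ^ (ρ / 2) * g ^ (1 - ρ / 2) := by
          rw [← Real.rpow_add hg0]; simp
      _ ≤ _ := mul_le_mul_of_nonneg_left
          (Real.rpow_le_rpow hg0.le hgb (by linarith [hρ.2])) (by positivity)
  have hgp : 0 ≤ g ^ (ρ / 2) := by positivity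
  have s4 : W ω * (P[Z|ℱ n]) ω ≤
      (1 + c1 * (M₀ * Kt * γbar ^ (1 - ρ / 2)) + c2 * CU) * g ^ (ρ / 2) := by
    have t1 := mul_le_mul_of_nonneg_left s1 hc1n
    have t2 := mul_le_mul_of_nonneg_left s2 (mul_nonneg hc2n hgp)
    have t3 := mul_le_mul_of_nonneg_left s3 (by positivity : 0 ≤ c1 * (M₀ * Kt))
    nlinarith
  have hTp : 0 < T ω := by linarith [hT1 ω]
  have s5 := mul_le_mul_of_nonneg_right s4 hTp.le
  have s6 : W ω * (P[Z|ℱ n]) ω * T ω = (P[Z|ℱ n]) ω := by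
    simp only [hW]; field_simp
  rw [s6] at s5
  exact s5
end
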